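/- Uniform Hölder estimate for the Dirichlet Laplacian on a sector: Let 0 < β < 1/2 and 0 < α < 1. Let f : Ω̄_β → ℝ with ‖f‖_{C^α(Ω̄_β)} < ∞, and let Ψ be the unique function that is continuous on Ω̄_β, twice continuously differentiable on Ω_β, satisfies ∂_{x₁x₁}Ψ + ∂_{x₂x₂}Ψ = f on Ω_β, Ψ = 0 on ∂Ω_β, and |Ψ(x)| ≤ C|x|² ln(e+|x|) for some constant C. Then, for a constant C = C(α,β) > 0: (i) |∇²Ψ(x)| ≤ C ln(2 + |x|) ‖f‖_{L^∞(Ω_β)} + C ‖f‖_{C^α(Ω̄_β)} for all x ∈ Ω_β; (ii) if in addition 0 < α < 1/β − 2, then sup_{x≠y∈Ω_β} |∇²Ψ(x) − ∇²Ψ(y)| / |x−y|^α ≤ C ‖f‖_{C^α(Ω̄_β)}. -/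

import Mathlib

open Set Complex
open scoped ENNReal NNReal Real

noncomputable section

/-- The open sector `Ω_β = { r e^{iθ} : r > 0, 0 < θ < βπ }` in `ℂ ≅ ℝ²`. -/
def Sector (β : ℝ) : Set ℂ := {z | z ≠ 0 ∧ 0 < Complex.arg z ∧ Complex.arg z < β * π}

/-- The Laplacian `ΔΨ = ∂_{x₁x₁}Ψ + ∂_{x₂x₂}Ψ` of a function `Ψ : ℂ → ℝ`. -/
def lap (Ψ : ℂ → ℝ) (z : ℂ) : ℝ :=
  fderiv ℝ (fun w => fderiv ℝ Ψ w 1) z 1 +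
    fderiv ℝ (fun w => fderiv ℝ Ψ w Complex.I) z Complex.I

/-- Second partial derivative of `Ψ` in the directions `v₁, v₂ ∈ {1, i}` (an entry of the
Hessian `∇²Ψ`). -/
def hess (Ψ : ℂ → ℝ) (v₁ v₂ : ℂ) (z : ℂ) : ℝ :=
  fderiv ℝ (fun w => fderiv ℝ Ψ w v₁) z v₂

/-- Sup-norm `‖f‖_{L^∞(D)}` of `f : ℂ → ℝ`, valued in `ℝ≥0∞`. -/
def supNormC (D : Set ℂ) (f : ℂ → ℝ) : ℝ≥0∞ := ⨆ z : D, (‖f (z : ℂ)‖₊ : ℝ≥0∞)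

/-- The scale-invariant Hölder norm `‖f‖_{∘C^α(D)}`, valued in `ℝ≥0∞`:
`sup_D |f| + sup_{z ≠ z'} | |z|^α f(z) - |z'|^α f(z') | / |z-z'|^α`. -/
def ringNormC (α : ℝ) (D : Set ℂ) (f : ℂ → ℝ) : ℝ≥0∞ :=
  supNormC D f +
    ⨆ p : {q : D × D // (q.1 : ℂ) ≠ (q.2 : ℂ)},
      (‖(‖(p.1.1 : ℂ)‖ ^ α) * f (p.1.1 : ℂ) - (‖(p.1.2 : ℂ)‖ ^ α) * f (p.1.2 : ℂ)‖₊ : ℝ≥0∞) /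
        ENNReal.ofReal (‖(p.1.1 : ℂ) - (p.1.2 : ℂ)‖ ^ α)

/-- The Hölder seminorm `sup_{z ≠ z'} |f(z) - f(z')| / |z-z'|^α`, valued in `ℝ≥0∞`. -/
def holderSemiC (α : ℝ) (D : Set ℂ) (f : ℂ → ℝ) : ℝ≥0∞ :=
  ⨆ p : {q : D × D // (q.1 : ℂ) ≠ (q.2 : ℂ)},
    (‖f (p.1.1 : ℂ) - f (p.1.2 : ℂ)‖₊ : ℝ≥0∞) /
      ENNReal.ofReal (‖(p.1.1 : ℂ) - (p.1.2 : ℂ)‖ ^ α)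

/-- The uniform Hölder norm `‖f‖_{C^α(D)} = sup_D |f| + Hölder seminorm`. -/
def unifNormC (α : ℝ) (D : Set ℂ) (f : ℂ → ℝ) : ℝ≥0∞ :=
  supNormC D f + holderSemiC α D f

/-!
The proof is Campanato's: on every small ball the solution is approximated by a quadratic
polynomial whose Laplacian is the value of `f` at the centre, up to an error `K r ^ (2 + α)`, and
comparing the polynomials of two centres, or of two radii, through their second differences gives
the Hölder bound on the Hessian. The approximation comes from improvement of flatness, since a
function with small Laplacian is close to a harmonic one. Near an edge an odd reflection reduces
it to the interior. At the vertex the polynomial is the one quadratic form with Laplacian `f 0`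
vanishing on both edges, and `2 + α < 1 / β` lets a harmonic barrier homogeneous of degree
strictly between `2 + α` and `1 / β` control the difference, so that a Phragmén–Lindelöf argument
applies. Without the restriction on `α`, a smaller Hölder exponent handles the unit scale; every
dyadic scale between it and the distance to the vertex then contributes a multiple of `‖f‖_∞`,
whence the logarithm.
-/

namespace SectorSchauder

open Filter Topology Polynomial Metric

lemma norm_eval_divX_le {P : ℂ[X]} {ρ M : ℝ}
    (h : ∀ z ∈ ball (0 : ℂ) ρ, ‖P.eval z - P.eval 0‖ ≤ M) {z : ℂ} (hz : z ∈ ball (0 : ℂ) ρ) :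
    ‖P.divX.eval z‖ ≤ M / ρ := by
  have hslope : dslope (fun w => P.eval w) 0 z = P.divX.eval z := by
    rcases eq_or_ne z 0 with rfl | hz0
    · simp [← coeff_zero_eq_eval_zero, coeff_divX, coeff_derivative]
    · have hP : P.eval z = P.divX.eval z * z + P.eval 0 := by
        conv_lhs => rw [← P.divX_mul_X_add]
        simp [coeff_zero_eq_eval_zero]
      rw [dslope_of_ne _ hz0, slope_def_field, hP]
      simp [hz0]
  rw [← hslope]
  exact norm_dslope_le_div_of_mapsTo_ball P.differentiable.differentiableOn
    (fun w hw => mem_closedBall_iff_norm.2 (h w hw)) hz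

lemma norm_eval_iterate_divX_le {P : ℂ[X]} {ρ M : ℝ}
    (h : ∀ z ∈ ball (0 : ℂ) ρ, ‖P.eval z‖ ≤ M) (n : ℕ) :
    ∀ z ∈ ball (0 : ℂ) ρ, ‖(divX^[n] P).eval z‖ ≤ (2 / ρ) ^ n * M := by
  induction n with
  | zero => simpa using h
  | succ n ih =>
    intro z hz
    have hρ : 0 < ρ := pos_of_mem_ball hz
    rw [Function.iterate_succ_apply']
    refine (norm_eval_divX_le (M := (2 / ρ) ^ n * M + (2 / ρ) ^ n * M) (fun w hw =>
      (norm_sub_le _ _).trans (add_le_add (ih w hw) (ih 0 (mem_ball_self hρ)))) hz).trans_eq ?_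
    ring

lemma norm_sub_zero_le_of_abs_re_le {f : ℂ → ℂ} {r M : ℝ} (hM : 0 < M)
    (hf : DifferentiableOn ℂ f (ball 0 r)) (h : ∀ z ∈ ball (0 : ℂ) r, |(f z).re| ≤ M) {z : ℂ}
    (hz : z ∈ ball (0 : ℂ) (r / 2)) : ‖f z - f 0‖ ≤ 4 * M := by
  have hz' : ‖z‖ < r / 2 := mem_ball_zero_iff.1 hz
  have hr : 0 < r := by linarith [norm_nonneg z]
  refine (borelCaratheodory_zero (f := fun w => f w - f 0) (M := 2 * M) (by positivity)
    (hf.sub_const _) (fun w hw => ?_) hr (by simpa using hz'.trans (by linarith))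
    (sub_self _)).trans ?_
  · change (f w - f 0).re ≤ 2 * M
    rw [sub_re]
    linarith [(abs_le.1 (h w hw)).2, (abs_le.1 (h 0 (mem_ball_self hr))).1]
  · rw [div_le_iff₀ (by linarith)]
    nlinarith

lemma coeff_iterate_divX (P : ℂ[X]) (n i : ℕ) : (divX^[n] P).coeff i = P.coeff (i + n) := by
  induction n generalizing i with
  | zero => rfl
  | succ n ih => rw [Function.iterate_succ_apply', coeff_divX, ih]; ring_nf

lemma exists_natDegree_le_norm_sub_le (P : ℂ[X]) (n : ℕ) {r M : ℝ} (hM : 0 < M)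
    (h : ∀ z ∈ ball (0 : ℂ) r, |(P.eval z).re| ≤ M) :
    ∃ Q : ℂ[X], Q.natDegree ≤ n ∧ ∀ z ∈ ball (0 : ℂ) (r / 2),
      ‖P.eval z - Q.eval z‖ ≤ 2 * (4 * ‖z‖ / r) ^ (n + 1) * M := by
  refine ⟨P - X ^ (n + 1) * divX^[n + 1] P, ?_, fun z hz => ?_⟩
  · refine natDegree_le_iff_coeff_eq_zero.2 fun i hi => ?_
    rw [coeff_sub, coeff_X_pow_mul', if_pos (Nat.succ_le_of_lt hi), coeff_iterate_divX,
      Nat.sub_add_cancel hi, sub_self]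
  · have hdivX : ∀ w ∈ ball (0 : ℂ) (r / 2), ‖P.divX.eval w‖ ≤ 4 * M / (r / 2) :=
      fun w hw => norm_eval_divX_le (fun y hy =>
        norm_sub_zero_le_of_abs_re_le hM P.differentiable.differentiableOn h hy) hw
    have htail := norm_eval_iterate_divX_le hdivX n z hz
    have hr : 0 < r := by linarith [pos_of_mem_ball hz]
    rw [eval_sub, sub_sub_cancel, eval_mul, eval_pow, eval_X, norm_mul, norm_pow,
      Function.iterate_succ_apply]
    calc ‖z‖ ^ (n + 1) * ‖(divX^[n] P.divX).eval z‖
        ≤ ‖z‖ ^ (n + 1) * ((2 / (r / 2)) ^ n * (4 * M / (r / 2))) := by gcongr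
      _ = 2 * (4 * ‖z‖ / r) ^ (n + 1) * M := by ring

/-! ### Campanato's iteration -/

lemma exists_mul_rpow_le {ε : ℝ} (hε : 0 < ε) (c : ℝ) :
    ∃ θ : ℝ, 0 < θ ∧ θ < 1 / 2 ∧ c * θ ^ ε ≤ 1 / 2 := by
  have hlim : Tendsto (fun θ : ℝ => c * θ ^ ε) (𝓝[>] 0) (𝓝 0) := by
    have := ((Real.continuousAt_rpow_const 0 ε (.inr hε.le)).tendsto.const_mul c).mono_left
      (nhdsWithin_le_nhds (s := Ioi 0))
    simpa [Real.zero_rpow hε.ne'] using this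
  obtain ⟨θ, hc, hθ⟩ := ((hlim.eventually_le_const (by norm_num : (0 : ℝ) < 1 / 2)).and
    (Ioo_mem_nhdsGT (by norm_num : (0 : ℝ) < 1 / 2))).exists
  exact ⟨θ, hθ.1, hθ.2, hc⟩

/-- `V` is approximated at `p`, on every ball of radius `r ≤ R`, by some harmonic polynomial up
to `K r ^ γ`. -/
def HasHarmonicApprox (V : ℂ → ℝ) (p : ℂ) (R K γ : ℝ) : Prop :=
  ∀ r, 0 < r → r ≤ R → ∃ P : ℂ[X], ∀ z ∈ closedBall p r, |V z - (P.eval (z - p)).re| ≤ K * r ^ γ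

/-- The polynomial of scale `ρ` is corrected by the Taylor polynomial of its difference to a good
harmonic approximation. -/
lemma exists_improved_approx {n : ℕ} {γ θ A K ρ : ℝ} (hθ0 : 0 < θ) (hθ : θ < 1 / 2)
    (hθn : 2 * 4 ^ (n + 1) * θ ^ (n + 1 - γ) ≤ 1 / 2) (hA : 1 + 2 / θ ^ γ ≤ A) (hK : 0 < K)
    (hρ : 0 < ρ) {V : ℂ → ℝ} {p : ℂ} {P Q : ℂ[X]} (hQ : Q.natDegree ≤ n)
    (hP : ∀ z ∈ closedBall p ρ, |V z - (P.eval (z - p)).re| ≤ K * ρ ^ γ)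
    (hVQ : ∀ z ∈ closedBall p ρ, |V z - (Q.eval (z - p)).re| ≤ A * K * ρ ^ γ) :
    ∃ Q' : ℂ[X], Q'.natDegree ≤ n ∧
      ∀ z ∈ closedBall p (θ * ρ), |V z - (Q'.eval (z - p)).re| ≤ A * K * (θ * ρ) ^ γ := by
  have hθγ : 0 < θ ^ γ := Real.rpow_pos_of_pos hθ0 γ
  have hA0 : 0 < A := lt_of_lt_of_le (by positivity) hA
  have hPQ : ∀ z ∈ ball (0 : ℂ) ρ, |((P - Q).eval z).re| ≤ (A + 1) * K * ρ ^ γ := by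
    intro z hz
    have hz' : p + z ∈ closedBall p ρ := by simpa using (mem_ball_zero_iff.1 hz).le
    have h₁ := abs_le.1 (hP _ hz')
    have h₂ := abs_le.1 (hVQ _ hz')
    rw [add_sub_cancel_left] at h₁ h₂
    rw [eval_sub, sub_re, abs_le]
    constructor <;> linarith
  obtain ⟨T, hT, hPT⟩ := exists_natDegree_le_norm_sub_le (P - Q) n (by positivity) hPQ
  refine ⟨Q + T, natDegree_add_le_of_degree_le hQ hT, fun z hz => ?_⟩
  have hzθ : ‖z - p‖ ≤ θ * ρ := mem_closedBall_iff_norm.1 hz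
  have hsmall : (4 * ‖z - p‖ / ρ) ^ (n + 1) ≤ 4 ^ (n + 1) * (θ ^ (n + 1 - γ) * θ ^ γ) := by
    rw [← Real.rpow_add hθ0, sub_add_cancel, ← Nat.cast_add_one, Real.rpow_natCast, ← mul_pow]
    gcongr
    rw [div_le_iff₀ hρ]
    linarith
  have hVP := hP z (closedBall_subset_closedBall (by nlinarith) hz)
  have htail := (abs_re_le_norm _).trans
    (hPT (z - p) (mem_ball_zero_iff.2 (hzθ.trans_lt (by nlinarith))))
  calc |V z - ((Q + T).eval (z - p)).re|
      = |(V z - (P.eval (z - p)).re) + ((P - Q).eval (z - p) - T.eval (z - p)).re| := by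
        simp only [eval_add, eval_sub, add_re, sub_re]
        ring_nf
    _ ≤ K * ρ ^ γ + 2 * (4 ^ (n + 1) * (θ ^ (n + 1 - γ) * θ ^ γ)) * ((A + 1) * K * ρ ^ γ) := by
        refine (abs_add_le _ _).trans (add_le_add hVP (htail.trans ?_))
        gcongr
    _ = (1 + (2 * 4 ^ (n + 1) * θ ^ (n + 1 - γ)) * (θ ^ γ * (A + 1))) * (K * ρ ^ γ) := by ring
    _ ≤ (1 + 1 / 2 * (θ ^ γ * (A + 1))) * (K * ρ ^ γ) := by gcongr
    _ ≤ θ ^ γ * A * (K * ρ ^ γ) := by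
        gcongr
        have : θ ^ γ + 2 ≤ θ ^ γ * A := by
          calc θ ^ γ + 2 = θ ^ γ * (1 + 2 / θ ^ γ) := by field_simp
            _ ≤ θ ^ γ * A := by gcongr
        linarith
    _ = A * K * (θ * ρ) ^ γ := by
        rw [Real.mul_rpow hθ0.le hρ.le]
        ring

theorem HasHarmonicApprox.exists_natDegree_le {n : ℕ} {γ : ℝ} (hγ0 : 0 ≤ γ) (hγ : γ < n + 1)
    (M : ℝ) : ∃ C > 0, ∀ {V : ℂ → ℝ} {p : ℂ} {R K : ℝ}, 0 < K → HasHarmonicApprox V p R K γ →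
      (∀ z ∈ closedBall p R, |V z| ≤ M * K * R ^ γ) →
      ∀ r, 0 < r → r ≤ R → ∃ Q : ℂ[X], Q.natDegree ≤ n ∧
        ∀ z ∈ closedBall p r, |V z - (Q.eval (z - p)).re| ≤ C * K * r ^ γ := by
  obtain ⟨θ, hθ0, hθ, hθn⟩ := exists_mul_rpow_le (sub_pos.2 hγ) (2 * 4 ^ (n + 1))
  have hθγ : 0 < θ ^ γ := Real.rpow_pos_of_pos hθ0 γ
  set A := max M (1 + 2 / θ ^ γ)
  have hA : 1 + 2 / θ ^ γ ≤ A := le_max_right _ _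
  have hA0 : 0 < A := lt_of_lt_of_le (by positivity) hA
  refine ⟨A / θ ^ γ, by positivity, fun {V p R K} hK happrox hV r hr hrR => ?_⟩
  have hR : 0 < R := hr.trans_le hrR
  have hdyadic : ∀ k : ℕ, ∃ Q : ℂ[X], Q.natDegree ≤ n ∧ ∀ z ∈ closedBall p (θ ^ k * R),
      |V z - (Q.eval (z - p)).re| ≤ A * K * (θ ^ k * R) ^ γ := by
    intro k
    induction k with
    | zero =>
      refine ⟨0, by simp, fun z hz => ?_⟩
      simp only [pow_zero, one_mul, eval_zero, zero_re, sub_zero] at hz ⊢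
      exact (hV z hz).trans (by gcongr; exact le_max_left _ _)
    | succ k ih =>
      obtain ⟨Q, hQ, hVQ⟩ := ih
      have hρR : θ ^ k * R ≤ R := mul_le_of_le_one_left hR.le (pow_le_one₀ hθ0.le (by linarith))
      obtain ⟨P, hP⟩ := happrox (θ ^ k * R) (by positivity) hρR
      rw [pow_succ', mul_assoc]
      exact exists_improved_approx hθ0 hθ hθn hA hK (by positivity) hQ hP hVQ
  obtain ⟨k, hk, hk'⟩ := exists_nat_pow_near_of_lt_one (div_pos hr hR) ((div_le_one hR).2 hrR) hθ0
    (by linarith)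
  rw [lt_div_iff₀ hR, pow_succ'] at hk
  obtain ⟨Q, hQ, hVQ⟩ := hdyadic k
  refine ⟨Q, hQ, fun z hz =>
    (hVQ z (closedBall_subset_closedBall ((div_le_iff₀ hR).1 hk') hz)).trans ?_⟩
  have hscale : θ ^ k * R ≤ r / θ := by
    rw [le_div_iff₀ hθ0]
    linarith
  calc A * K * (θ ^ k * R) ^ γ ≤ A * K * (r / θ) ^ γ := by gcongr
    _ = A / θ ^ γ * K * r ^ γ := by
      rw [Real.div_rpow hr.le hθ0.le]
      ring

/-! ### Harmonic polynomials are dense in the continuous functions on a circle -/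

lemma exists_polynomial_of_mem_span_fourier {T : ℝ} {F : C(AddCircle T, ℂ)}
    (hF : F ∈ Submodule.span ℂ (range (fourier (T := T)))) :
    ∃ P Q : ℂ[X], ∀ θ, F θ = P.eval (AddCircle.toCircle θ : ℂ) +
      (starRingEnd ℂ) (Q.eval (AddCircle.toCircle θ : ℂ)) := by
  induction hF using Submodule.span_induction with
  | mem _ hx =>
    obtain ⟨n, rfl⟩ := hx
    rcases Int.eq_nat_or_neg n with ⟨m, rfl | rfl⟩
    · exact ⟨X ^ m, 0, fun θ => by simp [fourier_apply, AddCircle.toCircle_nsmul]⟩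
    · exact ⟨0, X ^ m, fun θ => by
        simp [fourier_apply, AddCircle.toCircle_nsmul, AddCircle.toCircle_neg,
          ← Circle.coe_inv_eq_conj]⟩
  | zero => exact ⟨0, 0, by simp⟩
  | add _ _ _ _ hx hy =>
    obtain ⟨P, Q, h⟩ := hx
    obtain ⟨P', Q', h'⟩ := hy
    refine ⟨P + P', Q + Q', fun θ => ?_⟩
    simp only [ContinuousMap.add_apply, h, h', eval_add, map_add]
    ring
  | smul a _ _ hx =>
    obtain ⟨P, Q, h⟩ := hx
    refine ⟨C a * P, C ((starRingEnd ℂ) a) * Q, fun θ => ?_⟩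
    simp only [ContinuousMap.smul_apply, h, smul_eq_mul, eval_mul, eval_C, map_mul, conj_conj]
    ring

lemma exists_polynomial_re_near_circle {g : ℂ → ℝ} (hg : ContinuousOn g (sphere 0 1)) {ε : ℝ}
    (hε : 0 < ε) : ∃ P : ℂ[X], ∀ z ∈ sphere (0 : ℂ) 1, |g z - (P.eval z).re| ≤ ε := by
  have : Fact (0 < 2 * π) := ⟨Real.two_pi_pos⟩
  let G : C(AddCircle (2 * π), ℂ) :=
    ⟨fun θ => ((g (AddCircle.toCircle θ) : ℝ) : ℂ), continuous_ofReal.comp (hg.comp_continuous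
      (continuous_subtype_val.comp AddCircle.continuous_toCircle) fun θ =>
        mem_sphere_zero_iff_norm.2 (Circle.norm_coe _))⟩
  have hG : G ∈ closure (Submodule.span ℂ (range (fourier (T := 2 * π))) : Set _) := by
    rw [← Submodule.topologicalClosure_coe, span_fourier_closure_eq_top]
    trivial
  obtain ⟨F, hF, hFG⟩ := Metric.mem_closure_iff.1 hG ε hε
  obtain ⟨P, Q, hPQ⟩ := exists_polynomial_of_mem_span_fourier hF
  refine ⟨P + Q, fun z hz => ?_⟩
  obtain ⟨θ, hθ⟩ := (AddCircle.homeomorphCircle (T := 2 * π) (by positivity)).surjective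
    ⟨z, by simpa [Submonoid.unitSphere] using hz⟩
  have hθz : (AddCircle.toCircle θ : ℂ) = z := by
    rw [← AddCircle.homeomorphCircle_apply (T := 2 * π) (by positivity), hθ]
  have hFz := (ContinuousMap.dist_apply_le_dist θ).trans hFG.le
  rw [dist_eq_norm, hPQ θ, hθz, show G θ = (g z : ℂ) by simp [G, hθz]] at hFz
  calc |g z - ((P + Q).eval z).re|
      = |((g z : ℂ) - (P.eval z + (starRingEnd ℂ) (Q.eval z))).re| := by simp
    _ ≤ ε := (abs_re_le_norm _).trans hFz

lemma exists_polynomial_re_near {g : ℂ → ℝ} {p : ℂ} {r : ℝ} (hr : 0 < r)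
    (hg : ContinuousOn g (sphere p r)) {ε : ℝ} (hε : 0 < ε) :
    ∃ P : ℂ[X], ∀ z ∈ sphere p r, |g z - (P.eval (z - p)).re| ≤ ε := by
  have hg' : ContinuousOn (fun ζ : ℂ => g (p + r * ζ)) (sphere 0 1) :=
    hg.comp (by fun_prop) fun ζ hζ => by
      simp [abs_of_pos hr, mem_sphere_zero_iff_norm.1 hζ]
  obtain ⟨P, hP⟩ := exists_polynomial_re_near_circle hg' hε
  refine ⟨P.comp (C (r : ℂ)⁻¹ * X), fun z hz => ?_⟩
  have hr0 : (r : ℂ) ≠ 0 := ofReal_ne_zero.2 hr.ne'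
  have hzP := hP ((r : ℂ)⁻¹ * (z - p))
    (by simpa [abs_of_pos hr, hr.ne', inv_mul_eq_iff_eq_mul₀] using mem_sphere_iff_norm.1 hz)
  simpa [mul_inv_cancel_left₀ hr0] using hzP

/-! ### Second symmetric derivatives and pointwise Laplacians -/

section SecondSymmDeriv

variable {E F : Type*} [NormedAddCommGroup E] [NormedSpace ℝ E] [NormedAddCommGroup F]
  [NormedSpace ℝ F]

/-- `ℓ` is the second symmetric derivative of `w` at `z` in the direction `v`. Unlike a second
derivative it makes sense for functions that are merely continuous. -/
def HasSecondSymmDerivAt (w : E → ℝ) (ℓ : ℝ) (z v : E) : Prop :=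
  Tendsto (fun t : ℝ => (w (z + t • v) + w (z - t • v) - 2 * w z) / t ^ 2) (𝓝[>] 0) (𝓝 ℓ)

namespace HasSecondSymmDerivAt

variable {w w₁ w₂ : E → ℝ} {z v : E} {ℓ a b : ℝ}

lemma add (h₁ : HasSecondSymmDerivAt w₁ a z v) (h₂ : HasSecondSymmDerivAt w₂ b z v) :
    HasSecondSymmDerivAt (fun y => w₁ y + w₂ y) (a + b) z v :=
  (Tendsto.add h₁ h₂).congr fun t => by ring

lemma const_mul (c : ℝ) (h : HasSecondSymmDerivAt w a z v) :
    HasSecondSymmDerivAt (fun y => c * w y) (c * a) z v :=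
  (Tendsto.const_mul c h).congr fun t => by ring

lemma neg_direction (h : HasSecondSymmDerivAt w a z v) : HasSecondSymmDerivAt w a z (-v) :=
  Tendsto.congr (fun t => by simp only [smul_neg, sub_neg_eq_add, ← sub_eq_add_neg, add_comm]) h

lemma comp_linear {w : F → ℝ} (A : E →ₗ[ℝ] F) (h : HasSecondSymmDerivAt w a (A z) (A v)) :
    HasSecondSymmDerivAt (fun y => w (A y)) a z v := by
  simpa only [HasSecondSymmDerivAt, map_add, map_sub, map_smul] using h

lemma congr_of_eventuallyEq (h : HasSecondSymmDerivAt w₁ a z v) (hw : w₂ =ᶠ[𝓝 z] w₁) :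
    HasSecondSymmDerivAt w₂ a z v := by
  have hlim : ∀ c : E, Tendsto (fun t : ℝ => z + t • c) (𝓝[>] 0) (𝓝 z) := fun c =>
    (Continuous.tendsto' (by fun_prop) 0 z (by simp)).mono_left nhdsWithin_le_nhds
  refine Tendsto.congr' ?_ h
  filter_upwards [(hlim v).eventually hw, (hlim (-v)).eventually hw] with t ht₁ ht₂
  rw [smul_neg, ← sub_eq_add_neg] at ht₂
  rw [ht₁, ht₂, hw.self_of_nhds]

lemma nonpos_of_isLocalMax (h : HasSecondSymmDerivAt w a z v) (hz : IsLocalMax w z) : a ≤ 0 := by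
  have hlim : ∀ c : E, Tendsto (fun t : ℝ => z + t • c) (𝓝[>] 0) (𝓝 z) := fun c =>
    (Continuous.tendsto' (by fun_prop) 0 z (by simp)).mono_left nhdsWithin_le_nhds
  refine le_of_tendsto h ?_
  filter_upwards [(hlim v).eventually hz, (hlim (-v)).eventually hz] with t ht₁ ht₂
  rw [smul_neg, ← sub_eq_add_neg] at ht₂
  exact div_nonpos_of_nonpos_of_nonneg (by linarith) (sq_nonneg t)

lemma of_hasDerivAt {g' : ℝ → ℝ}
    (h : ∀ᶠ t : ℝ in 𝓝 0, HasDerivAt (fun t : ℝ => w (z + t • v)) (g' t) t)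
    (h' : HasDerivAt g' ℓ 0) : HasSecondSymmDerivAt w ℓ z v := by
  have hneg : Tendsto (fun t : ℝ => -t) (𝓝 0) (𝓝 0) := by
    simpa using (continuous_neg (G := ℝ)).tendsto 0
  have hnum : ∀ᶠ t : ℝ in 𝓝 0, HasDerivAt (fun t : ℝ => w (z + t • v) + w (z - t • v) - 2 * w z)
      (g' t - g' (-t)) t := by
    filter_upwards [h, hneg.eventually h] with t ht₁ ht₂
    simpa [Function.comp_def, sub_eq_add_neg] using
      (ht₁.add (ht₂.comp t (hasDerivAt_neg t))).sub_const (2 * w z)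
  refine HasDerivAt.lhopital_zero_nhdsGT (g' := fun t => 2 * t) (hnum.filter_mono inf_le_left)
    (.of_forall fun t => by simpa using hasDerivAt_pow 2 t) ?_ ?_ ?_ ?_
  · filter_upwards [self_mem_nhdsWithin] with t ht
    exact (mul_pos two_pos ht).ne'
  · refine (hnum.self_of_nhds.continuousAt.tendsto.mono_left nhdsWithin_le_nhds).trans_eq ?_
    simp [two_mul]
  · exact (Continuous.tendsto' (by fun_prop) 0 0 (by simp)).mono_left nhdsWithin_le_nhds
  · have hslope : HasDerivAt (fun t => g' t - g' (-t)) (2 * ℓ) 0 := by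
      have h'' : HasDerivAt g' ℓ (-0) := by simpa using h'
      exact (h'.sub (h''.comp 0 (hasDerivAt_neg 0))).congr_deriv (by ring)
    refine ((hslope.tendsto_slope_zero_right).div_const 2).congr (fun t => ?_) |>.trans_eq ?_
    · simp only [zero_add, neg_zero, sub_self, sub_zero, smul_eq_mul]
      ring
    · simp

end HasSecondSymmDerivAt

lemma eventually_hasDerivAt_line {w : E → ℝ} {z : E} (hw : ContDiffAt ℝ 2 w z) (v : E) :
    ∀ᶠ t : ℝ in 𝓝 0, HasDerivAt (fun t : ℝ => w (z + t • v)) (fderiv ℝ w (z + t • v) v) t := by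
  have hlim : Tendsto (fun t : ℝ => z + t • v) (𝓝 0) (𝓝 z) :=
    Continuous.tendsto' (by fun_prop) 0 z (by simp)
  filter_upwards [hlim.eventually (hw.eventually (by simp))] with t ht
  refine (ht.differentiableAt (by simp)).hasFDerivAt.comp_hasDerivAt t ?_
  simpa using ((hasDerivAt_id t).smul_const v).const_add z

lemma hasDerivAt_fderiv_line {w : E → ℝ} {z : E} (hw : ContDiffAt ℝ 2 w z) (v : E) :
    HasDerivAt (fun t : ℝ => fderiv ℝ w (z + t • v) v) (fderiv ℝ (fderiv ℝ w) z v v) 0 := by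
  have hd : DifferentiableAt ℝ (fderiv ℝ w) z :=
    (hw.fderiv_right (m := 1) (by norm_num)).differentiableAt (by simp)
  have hline : HasDerivAt (fun t : ℝ => z + t • v) v 0 := by
    simpa using ((hasDerivAt_id (0 : ℝ)).smul_const v).const_add z
  have hd' : HasFDerivAt (fderiv ℝ w) (fderiv ℝ (fderiv ℝ w) z) (z + (0 : ℝ) • v) := by
    simpa using hd.hasFDerivAt
  have hderiv : HasDerivAt (fun t : ℝ => fderiv ℝ w (z + t • v)) (fderiv ℝ (fderiv ℝ w) z v) 0 :=
    hd'.comp_hasDerivAt 0 hline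
  simpa using hderiv.clm_apply (hasDerivAt_const 0 v)

lemma hasSecondSymmDerivAt_of_contDiffAt {w : E → ℝ} {z : E} (hw : ContDiffAt ℝ 2 w z) (v : E) :
    HasSecondSymmDerivAt w (fderiv ℝ (fderiv ℝ w) z v v) z v :=
  .of_hasDerivAt (eventually_hasDerivAt_line hw v) (hasDerivAt_fderiv_line hw v)

lemma hasSecondSymmDerivAt_comp {φ φ' : ℝ → ℝ} {c : ℝ} {w : E → ℝ} {z : E}
    (hφ : ∀ᶠ x in 𝓝 (w z), HasDerivAt φ (φ' x) x) (hφ' : HasDerivAt φ' c (w z))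
    (hw : ContDiffAt ℝ 2 w z) (v : E) :
    HasSecondSymmDerivAt (fun y => φ (w y))
      (c * (fderiv ℝ w z v) ^ 2 + φ' (w z) * fderiv ℝ (fderiv ℝ w) z v v) z v := by
  have hlim : Tendsto (fun t : ℝ => w (z + t • v)) (𝓝 0) (𝓝 (w z)) :=
    hw.continuousAt.tendsto.comp (Continuous.tendsto' (by fun_prop) 0 z (by simp))
  have hline := eventually_hasDerivAt_line hw v
  refine .of_hasDerivAt (g' := fun t => φ' (w (z + t • v)) * fderiv ℝ w (z + t • v) v) ?_ ?_
  · filter_upwards [hline, hlim.eventually hφ] with t ht hφt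
    exact hφt.comp t ht
  · have hφ₀ : HasDerivAt φ' c (w (z + (0 : ℝ) • v)) := by simpa using hφ'
    refine ((hφ₀.comp 0 hline.self_of_nhds).mul (hasDerivAt_fderiv_line hw v)).congr_deriv ?_
    simp only [Function.comp, zero_smul, add_zero]
    ring

end SecondSymmDeriv

lemma apply_self_add_apply_I_mul (B : ℂ →L[ℝ] ℂ →L[ℝ] ℝ) (v : ℂ) :
    B v v + B (I * v) (I * v) = ‖v‖ ^ 2 * (B 1 1 + B I I) := by
  have hv : v = v.re • (1 : ℂ) + v.im • I := by simp
  have hIv : I * v = v.re • I - v.im • (1 : ℂ) := by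
    conv_lhs => rw [hv]
    simp only [real_smul, mul_one, mul_add]
    linear_combination (v.im : ℂ) * I_mul_I
  rw [hIv, Complex.sq_norm, normSq_apply]
  conv_lhs => enter [1]; rw [hv]
  simp only [map_add, map_sub, map_smul, add_apply, sub_apply, smul_apply, smul_eq_mul]
  ring

/-- The second symmetric derivatives of `w` at `z` in the directions `v` and `I * v` exist and add
up to `L`. Fixing the frame gives odd reflections across a line a pointwise Laplacian even at the
points of that line, where they need not be twice differentiable. -/
def HasFrameLaplacianAt (w : ℂ → ℝ) (L : ℝ) (z v : ℂ) : Prop :=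
  ∃ a b, HasSecondSymmDerivAt w a z v ∧ HasSecondSymmDerivAt w b z (I * v) ∧ a + b = L

namespace HasFrameLaplacianAt

variable {w w₁ w₂ : ℂ → ℝ} {z v : ℂ} {L L₁ L₂ : ℝ}

lemma add (h₁ : HasFrameLaplacianAt w₁ L₁ z v) (h₂ : HasFrameLaplacianAt w₂ L₂ z v) :
    HasFrameLaplacianAt (fun y => w₁ y + w₂ y) (L₁ + L₂) z v := by
  obtain ⟨a₁, b₁, ha₁, hb₁, rfl⟩ := h₁
  obtain ⟨a₂, b₂, ha₂, hb₂, rfl⟩ := h₂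
  exact ⟨_, _, ha₁.add ha₂, hb₁.add hb₂, by ring⟩

lemma const_mul (c : ℝ) (h : HasFrameLaplacianAt w L z v) :
    HasFrameLaplacianAt (fun y => c * w y) (c * L) z v := by
  obtain ⟨a, b, ha, hb, rfl⟩ := h
  exact ⟨_, _, ha.const_mul c, hb.const_mul c, by ring⟩

lemma neg (h : HasFrameLaplacianAt w L z v) : HasFrameLaplacianAt (fun y => -w y) (-L) z v := by
  simpa using h.const_mul (-1)

lemma sub (h₁ : HasFrameLaplacianAt w₁ L₁ z v) (h₂ : HasFrameLaplacianAt w₂ L₂ z v) :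
    HasFrameLaplacianAt (fun y => w₁ y - w₂ y) (L₁ - L₂) z v := by
  simpa only [sub_eq_add_neg] using h₁.add h₂.neg

lemma congr_of_eventuallyEq (h : HasFrameLaplacianAt w₁ L z v) (hw : w₂ =ᶠ[𝓝 z] w₁) :
    HasFrameLaplacianAt w₂ L z v := by
  obtain ⟨a, b, ha, hb, rfl⟩ := h
  exact ⟨a, b, ha.congr_of_eventuallyEq hw, hb.congr_of_eventuallyEq hw, rfl⟩

/-- Antilinear isometries reverse the orientation of frames. -/
lemma comp_antilinear {A : ℂ →ₗ[ℝ] ℂ} (hA : ∀ y, A (I * y) = -(I * A y))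
    (h : HasFrameLaplacianAt w L (A z) (A v)) : HasFrameLaplacianAt (fun y => w (A y)) L z v := by
  obtain ⟨a, b, ha, hb, rfl⟩ := h
  exact ⟨a, b, ha.comp_linear A, .comp_linear A (hA v ▸ hb.neg_direction), rfl⟩

lemma nonpos_of_isLocalMax (h : HasFrameLaplacianAt w L z v) (hz : IsLocalMax w z) : L ≤ 0 := by
  obtain ⟨a, b, ha, hb, rfl⟩ := h
  linarith [ha.nonpos_of_isLocalMax hz, hb.nonpos_of_isLocalMax hz]

end HasFrameLaplacianAt

open InnerProductSpace Laplacian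

lemma hasFrameLaplacianAt_of_contDiffAt {w : ℂ → ℝ} {z v : ℂ} (hw : ContDiffAt ℝ 2 w z)
    (hv : ‖v‖ = 1) : HasFrameLaplacianAt w (Δ w z) z v := by
  refine ⟨_, _, hasSecondSymmDerivAt_of_contDiffAt hw v,
    hasSecondSymmDerivAt_of_contDiffAt hw (I * v), ?_⟩
  simp [apply_self_add_apply_I_mul, hv, laplacian_eq_iteratedFDeriv_complexPlane,
    iteratedFDeriv_two_apply]

lemma hasFrameLaplacianAt_of_harmonicAt {w : ℂ → ℝ} {z v : ℂ} (hw : HarmonicAt w z)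
    (hv : ‖v‖ = 1) : HasFrameLaplacianAt w 0 z v := by
  simpa [hw.2.self_of_nhds] using hasFrameLaplacianAt_of_contDiffAt hw.1 hv

lemma hasFrameLaplacianAt_eval_re (P : ℂ[X]) (p z : ℂ) {v : ℂ} (hv : ‖v‖ = 1) :
    HasFrameLaplacianAt (fun y => (P.eval (y - p)).re) 0 z v := by
  refine hasFrameLaplacianAt_of_harmonicAt (AnalyticAt.harmonicAt_re ?_) hv
  exact (P.differentiable.comp (differentiable_id.sub_const p)).analyticAt z

lemma hasFrameLaplacianAt_re_rpow {F : ℂ → ℂ} {z v : ℂ} (hF : AnalyticAt ℂ F z)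
    (hpos : 0 < (F z).re) (s : ℝ) (hv : ‖v‖ = 1) :
    HasFrameLaplacianAt (fun y => (F y).re ^ s)
      (s * (s - 1) * (F z).re ^ (s - 2) * ‖deriv F z‖ ^ 2) z v := by
  set w : ℂ → ℝ := fun y => (F y).re
  have hw : HarmonicAt w z := hF.harmonicAt_re
  have hw' : ∀ y, fderiv ℝ w z y = (deriv F z * y).re := fun y => by
    have hre : HasFDerivAt w _ z :=
      reCLM.hasFDerivAt.comp z (hF.differentiableAt.hasDerivAt.hasFDerivAt.restrictScalars ℝ)
    simp [hre.fderiv, mul_comm]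
  have hφ : ∀ᶠ x in 𝓝 (w z), HasDerivAt (fun x : ℝ => x ^ s) (s * x ^ (s - 1)) x := by
    filter_upwards [lt_mem_nhds hpos] with x hx
    exact Real.hasDerivAt_rpow_const (.inl hx.ne')
  have hφ' : HasDerivAt (fun x : ℝ => s * x ^ (s - 1)) (s * ((s - 1) * w z ^ (s - 1 - 1))) (w z) :=
    (Real.hasDerivAt_rpow_const (.inl hpos.ne')).const_mul s
  have hharm : fderiv ℝ (fderiv ℝ w) z v v + fderiv ℝ (fderiv ℝ w) z (I * v) (I * v) = 0 := by
    simpa [apply_self_add_apply_I_mul, hv, laplacian_eq_iteratedFDeriv_complexPlane,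
      iteratedFDeriv_two_apply] using hw.2.self_of_nhds
  have hgrad : fderiv ℝ w z v ^ 2 + fderiv ℝ w z (I * v) ^ 2 = ‖deriv F z‖ ^ 2 := by
    rw [hw', hw', mul_left_comm, I_mul_re, neg_sq, ← mul_one (‖deriv F z‖), ← hv, ← norm_mul,
      Complex.sq_norm, normSq_apply]
    ring
  refine ⟨_, _, hasSecondSymmDerivAt_comp hφ hφ' hw.1 v,
    hasSecondSymmDerivAt_comp hφ hφ' hw.1 (I * v), ?_⟩
  rw [← hgrad, show s - 2 = s - 1 - 1 by ring]
  linear_combination s * w z ^ (s - 1) * hharm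

/-! ### Quadratic polynomials -/

/-- `q` is a real polynomial of degree at most two on `ℂ` with Laplacian `e`, written as the real
part of a complex quadratic plus the multiple of `‖z‖ ^ 2` with Laplacian `e`. -/
def IsQuadratic (q : ℂ → ℝ) (e : ℝ) : Prop :=
  ∃ c₀ c₁ c₂ : ℂ, ∀ z, q z = (c₀ + c₁ * z + c₂ * z ^ 2).re + e / 4 * ‖z‖ ^ 2

/-- The second difference of `q` at the origin; for a quadratic polynomial this is its Hessian,
viewed as a quadratic form. -/
def secondDiff (q : ℂ → ℝ) (v : ℂ) : ℝ := q v + q (-v) - 2 * q 0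

lemma secondDiff_sub (q₁ q₂ : ℂ → ℝ) (v : ℂ) :
    secondDiff (fun z => q₁ z - q₂ z) v = secondDiff q₁ v - secondDiff q₂ v := by
  simp only [secondDiff]
  ring

lemma isQuadratic_mul_norm_sq (e : ℝ) : IsQuadratic (fun z => e / 4 * ‖z‖ ^ 2) e :=
  ⟨0, 0, 0, fun z => by simp⟩

lemma isQuadratic_const (c : ℝ) : IsQuadratic (fun _ => c) 0 := ⟨c, 0, 0, fun z => by simp⟩

lemma isQuadratic_eval_re {P : ℂ[X]} (hP : P.natDegree ≤ 2) :
    IsQuadratic (fun z => (P.eval z).re) 0 :=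
  ⟨P.coeff 0, P.coeff 1, P.coeff 2, fun z => by
    simp [P.eval_eq_sum_range' (Nat.lt_succ_of_le hP), Finset.sum_range_succ]⟩

namespace IsQuadratic

variable {q q₁ q₂ : ℂ → ℝ} {e e₁ e₂ : ℝ}

lemma add (h₁ : IsQuadratic q₁ e₁) (h₂ : IsQuadratic q₂ e₂) :
    IsQuadratic (fun z => q₁ z + q₂ z) (e₁ + e₂) := by
  obtain ⟨c₀, c₁, c₂, h⟩ := h₁
  obtain ⟨d₀, d₁, d₂, h'⟩ := h₂
  refine ⟨c₀ + d₀, c₁ + d₁, c₂ + d₂, fun z => ?_⟩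
  simp only [h, h', add_re, add_mul]
  ring

lemma const_mul (c : ℝ) (h : IsQuadratic q e) : IsQuadratic (fun z => c * q z) (c * e) := by
  obtain ⟨c₀, c₁, c₂, h⟩ := h
  refine ⟨c * c₀, c * c₁, c * c₂, fun z => ?_⟩
  dsimp only
  rw [h, mul_add, ← re_ofReal_mul]
  ring_nf

lemma sub (h₁ : IsQuadratic q₁ e₁) (h₂ : IsQuadratic q₂ e₂) :
    IsQuadratic (fun z => q₁ z - q₂ z) (e₁ - e₂) := by
  simpa [sub_eq_add_neg] using h₁.add (h₂.const_mul (-1))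

lemma translate (h : IsQuadratic q e) (p : ℂ) : IsQuadratic (fun z => q (z - p)) e := by
  obtain ⟨c₀, c₁, c₂, h⟩ := h
  refine ⟨c₀ - c₁ * p + c₂ * p ^ 2 + (e / 4 * ‖p‖ ^ 2 : ℝ),
    c₁ - 2 * c₂ * p - (e / 2 : ℝ) * (starRingEnd ℂ) p, c₂, fun z => ?_⟩
  simp only [h, Complex.sq_norm, normSq_apply]
  simp [pow_two]
  ring

lemma continuous (h : IsQuadratic q e) : Continuous q := by
  obtain ⟨c₀, c₁, c₂, h⟩ := h
  rw [show q = _ from funext h]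
  fun_prop

lemma secondDiff_eq (h : IsQuadratic q e) (z v : ℂ) (t : ℝ) :
    q (z + t • v) + q (z - t • v) - 2 * q z = t ^ 2 * secondDiff q v := by
  obtain ⟨c₀, c₁, c₂, h⟩ := h
  simp only [secondDiff, h, Complex.sq_norm, normSq_apply]
  simp [pow_two]
  ring

lemma hasSecondSymmDerivAt (h : IsQuadratic q e) (z v : ℂ) :
    HasSecondSymmDerivAt q (secondDiff q v) z v := by
  refine tendsto_const_nhds.congr' ?_
  filter_upwards [self_mem_nhdsWithin] with t ht
  rw [h.secondDiff_eq, mul_div_cancel_left₀ _ (pow_ne_zero 2 (ne_of_gt ht))]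

lemma secondDiff_add_secondDiff_I_mul (h : IsQuadratic q e) (v : ℂ) :
    secondDiff q v + secondDiff q (I * v) = e * ‖v‖ ^ 2 := by
  obtain ⟨c₀, c₁, c₂, h⟩ := h
  simp only [secondDiff, h, Complex.sq_norm, normSq_apply]
  simp [pow_two]
  ring

lemma hasFrameLaplacianAt (h : IsQuadratic q e) (z : ℂ) {v : ℂ} (hv : ‖v‖ = 1) :
    HasFrameLaplacianAt q e z v :=
  ⟨_, _, h.hasSecondSymmDerivAt z v, h.hasSecondSymmDerivAt z (I * v), by
    rw [h.secondDiff_add_secondDiff_I_mul, hv, one_pow, mul_one]⟩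

end IsQuadratic

/-! ### The maximum principle and pointwise Schauder estimates on discs -/

lemma nonpos_of_hasFrameLaplacianAt_pos {K U : Set ℂ} (hK : IsCompact K) (hU : IsOpen U)
    (hUK : U ⊆ K) {w : ℂ → ℝ} {v : ℂ} (hc : ContinuousOn w K)
    (hL : ∀ z ∈ U, ∃ L > 0, HasFrameLaplacianAt w L z v) (hb : ∀ z ∈ K \ U, w z ≤ 0) :
    ∀ z ∈ K, w z ≤ 0 := by
  intro z hz
  obtain ⟨m, hm, hmax⟩ := hK.exists_isMaxOn ⟨z, hz⟩ hc
  refine (hmax hz).trans (hb m ⟨hm, fun hmU => ?_⟩)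
  obtain ⟨L, hL₀, hL⟩ := hL m hmU
  exact hL₀.not_ge
    (hL.nonpos_of_isLocalMax ((hmax.on_subset hUK).isLocalMax (hU.mem_nhds hmU)))

lemma le_of_neg_le_laplacian {K U : Set ℂ} (hK : IsCompact K) (hU : IsOpen U) (hUK : U ⊆ K)
    {w : ℂ → ℝ} {p v : ℂ} {r A ε : ℝ} (hv : ‖v‖ = 1) (hA : 0 < A) (hKr : K ⊆ closedBall p r)
    (hc : ContinuousOn w K) (hL : ∀ z ∈ U, ∃ L, -A ≤ L ∧ HasFrameLaplacianAt w L z v)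
    (hb : ∀ z ∈ K \ U, w z ≤ ε) : ∀ z ∈ K, w z ≤ ε + A / 2 * r ^ 2 := by
  have hq : IsQuadratic (fun z => 2 * A / 4 * ‖z - p‖ ^ 2 - (ε + A / 2 * r ^ 2)) (2 * A) := by
    simpa using ((isQuadratic_mul_norm_sq (2 * A)).translate p).sub
      (isQuadratic_const (ε + A / 2 * r ^ 2))
  have hmax := nonpos_of_hasFrameLaplacianAt_pos hK hU hUK (v := v)
    (hc.fun_add hq.continuous.continuousOn) (fun z hz => ?_) (fun z hz => ?_)
  · intro z hz
    nlinarith [hmax z hz, sq_nonneg ‖z - p‖]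
  · obtain ⟨L, hAL, hL⟩ := hL z hz
    exact ⟨L + 2 * A, by linarith, hL.add (hq.hasFrameLaplacianAt z hv)⟩
  · have hzr : ‖z - p‖ ^ 2 ≤ r ^ 2 := by
      gcongr
      exact mem_closedBall_iff_norm.1 (hKr hz.1)
    nlinarith [hb z hz]

lemma abs_le_of_abs_laplacian_le {K U : Set ℂ} (hK : IsCompact K) (hU : IsOpen U) (hUK : U ⊆ K)
    {w : ℂ → ℝ} {p v : ℂ} {r A ε : ℝ} (hv : ‖v‖ = 1) (hA : 0 < A) (hKr : K ⊆ closedBall p r)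
    (hc : ContinuousOn w K) (hL : ∀ z ∈ U, ∃ L, |L| ≤ A ∧ HasFrameLaplacianAt w L z v)
    (hb : ∀ z ∈ K \ U, |w z| ≤ ε) : ∀ z ∈ K, |w z| ≤ ε + A / 2 * r ^ 2 := by
  refine fun z hz => abs_le'.2 ⟨?_, ?_⟩
  · refine le_of_neg_le_laplacian hK hU hUK hv hA hKr hc (fun y hy => ?_)
      (fun y hy => (le_abs_self _).trans (hb y hy)) z hz
    obtain ⟨L, hLA, hL⟩ := hL y hy
    exact ⟨L, (abs_le.1 hLA).1, hL⟩
  · refine le_of_neg_le_laplacian hK hU hUK hv hA hKr hc.neg (fun y hy => ?_)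
      (fun y hy => (neg_le_abs _).trans (hb y hy)) z hz
    obtain ⟨L, hLA, hL⟩ := hL y hy
    exact ⟨-L, neg_le_neg (abs_le.1 hLA).2, hL.neg⟩

lemma exists_polynomial_re_near_of_abs_laplacian_le {w : ℂ → ℝ} {p v : ℂ} {r A : ℝ} (hv : ‖v‖ = 1)
    (hr : 0 < r) (hA : 0 < A) (hc : ContinuousOn w (closedBall p r))
    (hL : ∀ z ∈ ball p r, ∃ L, |L| ≤ A ∧ HasFrameLaplacianAt w L z v) :
    ∃ P : ℂ[X], ∀ z ∈ closedBall p r, |w z - (P.eval (z - p)).re| ≤ A * r ^ 2 := by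
  obtain ⟨P, hP⟩ := exists_polynomial_re_near hr (hc.mono sphere_subset_closedBall)
    (show 0 < A / 2 * r ^ 2 by positivity)
  have hPc : Continuous fun z => (P.eval (z - p)).re := by fun_prop
  refine ⟨P, fun z hz => ?_⟩
  have hmax := abs_le_of_abs_laplacian_le (isCompact_closedBall p r) isOpen_ball
    ball_subset_closedBall hv hA subset_rfl (hc.fun_sub hPc.continuousOn) (fun y hy => ?_)
    (fun y hy => hP y (by rwa [closedBall_sdiff_ball] at hy)) z hz
  · linarith
  · obtain ⟨L, hLA, hL⟩ := hL y hy
    exact ⟨L - 0, by rwa [sub_zero], hL.sub (hasFrameLaplacianAt_eval_re P p y hv)⟩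

theorem exists_isQuadratic_of_abs_laplacian_le {α : ℝ} (hα0 : 0 ≤ α) (hα1 : α < 1) (M : ℝ) :
    ∃ C > 0, ∀ {w : ℂ → ℝ} {p v : ℂ} {R K : ℝ}, ‖v‖ = 1 → 0 < K →
      ContinuousOn w (closedBall p R) →
      (∀ z ∈ ball p R, ∃ L, |L| ≤ K * ‖z - p‖ ^ α ∧ HasFrameLaplacianAt w L z v) →
      (∀ z ∈ closedBall p R, |w z| ≤ M * K * R ^ (2 + α)) →
      ∀ r, 0 < r → r ≤ R → ∃ q, IsQuadratic q 0 ∧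
        ∀ z ∈ closedBall p r, |w z - q z| ≤ C * K * r ^ (2 + α) := by
  obtain ⟨C, hC, hiter⟩ := HasHarmonicApprox.exists_natDegree_le (n := 2) (γ := 2 + α)
    (by positivity) (by push_cast; linarith) M
  refine ⟨C, hC, fun {w p v R K} hv hK hc hL hM r hr hrR => ?_⟩
  have happrox : HasHarmonicApprox w p R K (2 + α) := by
    intro s hs hsR
    have hLs : ∀ z ∈ ball p s, ∃ L, |L| ≤ K * s ^ α ∧ HasFrameLaplacianAt w L z v := by
      intro z hz
      obtain ⟨L, hLK, hL⟩ := hL z (ball_subset_ball hsR hz)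
      refine ⟨L, hLK.trans ?_, hL⟩
      have hzs : ‖z - p‖ ≤ s := (mem_ball_iff_norm.1 hz).le
      gcongr
    obtain ⟨P, hP⟩ := exists_polynomial_re_near_of_abs_laplacian_le hv hs (by positivity)
      (hc.mono (closedBall_subset_closedBall hsR)) hLs
    refine ⟨P, fun z hz => (hP z hz).trans_eq ?_⟩
    rw [add_comm 2 α, Real.rpow_add hs, Real.rpow_two, mul_assoc]
  obtain ⟨Q, hQ, hwQ⟩ := hiter hK happrox hM r hr hrR
  exact ⟨_, (isQuadratic_eval_re hQ).translate p, hwQ⟩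

/-! ### Odd reflection -/

open scoped ComplexConjugate

/-- The odd reflection of `u` across the real axis. -/
def oddExt (u : ℂ → ℝ) (z : ℂ) : ℝ := if 0 ≤ z.im then u z else -u (conj z)

lemma oddExt_of_nonneg (u : ℂ → ℝ) {z : ℂ} (hz : 0 ≤ z.im) : oddExt u z = u z := if_pos hz

lemma oddExt_of_nonpos {u : ℂ → ℝ} {z : ℂ} (h0 : z.im = 0 → u z = 0) (hz : z.im ≤ 0) :
    oddExt u z = -u (conj z) := by
  rcases hz.lt_or_eq with hz | hz
  · exact if_neg hz.not_ge
  · rw [oddExt_of_nonneg u hz.ge, conj_eq_iff_im.2 hz, h0 hz, neg_zero]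

lemma oddExt_conj {u : ℂ → ℝ} {z : ℂ} (h0 : z.im = 0 → u z = 0) :
    oddExt u (conj z) = -oddExt u z := by
  rcases le_total 0 z.im with hz | hz
  · rw [oddExt_of_nonneg u hz, oddExt_of_nonpos (fun h => ?_) (by simpa using hz), conj_conj]
    rw [conj_im, neg_eq_zero] at h
    rw [conj_eq_iff_im.2 h, h0 h]
  · rw [oddExt_of_nonpos h0 hz, oddExt_of_nonneg u (by simpa using hz), neg_neg]

lemma conj_mem_closedBall {p z : ℂ} {r : ℝ} (hp : p.im = 0) (hz : z ∈ closedBall p r) :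
    conj z ∈ closedBall p r := by
  rwa [mem_closedBall, dist_eq_norm, ← conj_eq_iff_im.2 hp, ← map_sub, norm_conj,
    ← mem_closedBall_iff_norm]

lemma abs_oddExt_le {u : ℂ → ℝ} {p : ℂ} {r A : ℝ} (hp : p.im = 0)
    (hA : ∀ z ∈ closedBall p r ∩ {z | 0 ≤ z.im}, |u z| ≤ A) :
    ∀ z ∈ closedBall p r, |oddExt u z| ≤ A := by
  intro z hz
  rcases le_or_gt 0 z.im with him | him
  · exact (oddExt_of_nonneg u him).symm ▸ hA z ⟨hz, him⟩
  · rw [oddExt, if_neg him.not_ge, abs_neg]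
    exact hA _ ⟨conj_mem_closedBall hp hz, by simpa using him.le⟩

lemma continuousOn_oddExt {u : ℂ → ℝ} {p : ℂ} {r : ℝ} (hp : p.im = 0)
    (hc : ContinuousOn u (closedBall p r ∩ {z | 0 ≤ z.im}))
    (h0 : ∀ z ∈ closedBall p r, z.im = 0 → u z = 0) :
    ContinuousOn (oddExt u) (closedBall p r) := by
  have hcover : closedBall p r =
      (closedBall p r ∩ {z | 0 ≤ z.im}) ∪ (closedBall p r ∩ {z | z.im ≤ 0}) := by
    rw [← inter_union_distrib_left]
    ext z
    simp [le_total]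
  rw [hcover]
  refine ContinuousOn.union_of_isClosed (hc.congr fun z hz => oddExt_of_nonneg u hz.2) ?_
    (isClosed_closedBall.inter (isClosed_le continuous_const continuous_im))
    (isClosed_closedBall.inter (isClosed_le continuous_im continuous_const))
  refine (hc.comp continuous_conj.continuousOn fun z hz => ?_).neg.congr fun z hz =>
    oddExt_of_nonpos (h0 z hz.1) hz.2
  exact ⟨conj_mem_closedBall hp hz.1, by simpa using hz.2⟩

/-- The pointwise Laplacian survives on the axis because both second differences of the frame
`1, I` vanish there. -/
lemma exists_hasFrameLaplacianAt_oddExt {u : ℂ → ℝ} {p : ℂ} {r : ℝ} {φ : ℝ → ℝ} (hp : p.im = 0)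
    (hφ : ∀ x, 0 ≤ x → 0 ≤ φ x) (h0 : ∀ z ∈ ball p r, z.im = 0 → u z = 0)
    (hL : ∀ z ∈ ball p r, 0 < z.im → ∃ L, |L| ≤ φ ‖z - p‖ ∧ HasFrameLaplacianAt u L z 1) :
    ∀ z ∈ ball p r, ∃ L, |L| ≤ φ ‖z - p‖ ∧ HasFrameLaplacianAt (oddExt u) L z 1 := by
  intro z hz
  rcases lt_trichotomy z.im 0 with him | him | him
  · have hnorm : ‖conj z - p‖ = ‖z - p‖ := by
      rw [← norm_conj (z - p), map_sub, conj_eq_iff_im.2 hp]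
    obtain ⟨L, hLφ, hL⟩ := hL (conj z) (by rwa [mem_ball_iff_norm, hnorm, ← mem_ball_iff_norm])
      (by simpa using him)
    have hL' : HasFrameLaplacianAt u L (conjAe.toLinearMap z) (conjAe.toLinearMap 1) := by
      simpa using hL
    refine ⟨-L, by rwa [abs_neg, ← hnorm],
      (hL'.comp_antilinear (by simp)).neg.congr_of_eventuallyEq ?_⟩
    filter_upwards [continuous_im.continuousAt.eventually_lt_const him] with y hy
    exact if_neg hy.not_ge
  · have hbase : oddExt u z = 0 := by rw [oddExt_of_nonneg u him.ge, h0 z hz him]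
    have hball : ∀ c : ℂ, ∀ᶠ t : ℝ in 𝓝[>] 0, z + t • c ∈ ball p r := fun c =>
      ((Continuous.tendsto' (by fun_prop) 0 z (by simp)).mono_left nhdsWithin_le_nhds).eventually
        (isOpen_ball.mem_nhds hz)
    refine ⟨0, by simpa using hφ _ (norm_nonneg _), 0, 0, ?_, ?_, add_zero 0⟩
    · refine tendsto_const_nhds.congr' ?_
      filter_upwards [hball 1, hball (-1)] with t ht₁ ht₂
      rw [smul_neg, ← sub_eq_add_neg] at ht₂
      rw [hbase, oddExt_of_nonneg u (by simp [him]), oddExt_of_nonneg u (by simp [him]),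
        h0 _ ht₁ (by simp [him]), h0 _ ht₂ (by simp [him])]
      simp
    · refine tendsto_const_nhds.congr' ?_
      filter_upwards [self_mem_nhdsWithin] with t ht
      have hconj : z - t • (I * 1) = conj (z + t • (I * 1)) := by
        apply Complex.ext <;> simp [him]
      have ht₀ : t ≠ 0 := ne_of_gt ht
      rw [hconj, oddExt_conj (fun h => absurd (by simpa [him] using h) ht₀), hbase]
      simp
  · obtain ⟨L, hLφ, hL⟩ := hL z hz him
    refine ⟨L, hLφ, hL.congr_of_eventuallyEq ?_⟩
    filter_upwards [continuous_im.continuousAt.eventually_const_lt him] with y hy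
    exact if_pos hy.le

/-! ### Sectors and their reflections -/

/-- The reflection in the bisector of the sector of opening `ϑ` at the origin. -/
def bisectorRefl (ϑ : ℝ) : ℂ ≃ₗᵢ[ℝ] ℂ := conjLIE.trans (rotation (Circle.exp ϑ))

/-- The closed sector of opening `ϑ`, as an intersection of two half planes that `bisectorRefl`
exchanges; these are the points `0` and `z` with `0 ≤ arg z ≤ ϑ`, provided `0 < ϑ ≤ π`. -/
def closedSector (ϑ : ℝ) : Set ℂ := {z | 0 ≤ z.im ∧ 0 ≤ (bisectorRefl ϑ z).im}

/-- The interior of `closedSector ϑ`, in the same encoding. -/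
def openSector (ϑ : ℝ) : Set ℂ := {z | 0 < z.im ∧ 0 < (bisectorRefl ϑ z).im}

section Sector

variable {ϑ : ℝ}

lemma bisectorRefl_apply (ϑ : ℝ) (z : ℂ) : bisectorRefl ϑ z = cexp (ϑ * I) * conj z := by
  simp [bisectorRefl, rotation_apply]

lemma bisectorRefl_im (ϑ : ℝ) (z : ℂ) :
    (bisectorRefl ϑ z).im = Real.sin ϑ * z.re - Real.cos ϑ * z.im := by
  simp [bisectorRefl_apply, exp_ofReal_mul_I_re, exp_ofReal_mul_I_im]
  ring

lemma bisectorRefl_im_eq_norm_mul_sin (ϑ : ℝ) (z : ℂ) :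
    (bisectorRefl ϑ z).im = ‖z‖ * Real.sin (ϑ - arg z) := by
  rw [bisectorRefl_im, Real.sin_sub, ← norm_mul_cos_arg z, ← norm_mul_sin_arg z]
  simp only [norm_mul_cos_arg, norm_mul_sin_arg]
  linear_combination -Real.sin ϑ * norm_mul_cos_arg z + Real.cos ϑ * norm_mul_sin_arg z

lemma bisectorRefl_bisectorRefl (ϑ : ℝ) (z : ℂ) : bisectorRefl ϑ (bisectorRefl ϑ z) = z := by
  rw [bisectorRefl_apply, bisectorRefl_apply, map_mul, conj_conj, ← exp_conj, ← mul_assoc,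
    ← exp_add]
  simp

lemma bisectorRefl_I_mul (ϑ : ℝ) (z : ℂ) :
    bisectorRefl ϑ (I * z) = -(I * bisectorRefl ϑ z) := by
  simp only [bisectorRefl_apply, map_mul, conj_I]
  ring

lemma isClosed_closedSector (ϑ : ℝ) : IsClosed (closedSector ϑ) :=
  (isClosed_le continuous_const continuous_im).inter
    (isClosed_le continuous_const (continuous_im.comp (bisectorRefl ϑ).continuous))

lemma isOpen_openSector (ϑ : ℝ) : IsOpen (openSector ϑ) :=
  (isOpen_lt continuous_const continuous_im).inter
    (isOpen_lt continuous_const (continuous_im.comp (bisectorRefl ϑ).continuous))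

lemma openSector_subset_closedSector (ϑ : ℝ) : openSector ϑ ⊆ closedSector ϑ :=
  fun _ h => ⟨h.1.le, h.2.le⟩

lemma bisectorRefl_mem_closedSector {z : ℂ} :
    bisectorRefl ϑ z ∈ closedSector ϑ ↔ z ∈ closedSector ϑ := by
  simp only [closedSector, mem_ofPred_eq, bisectorRefl_bisectorRefl, and_comm]

lemma bisectorRefl_mem_openSector {z : ℂ} :
    bisectorRefl ϑ z ∈ openSector ϑ ↔ z ∈ openSector ϑ := by
  simp only [openSector, mem_ofPred_eq, bisectorRefl_bisectorRefl, and_comm]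

lemma zero_mem_closedSector (ϑ : ℝ) : (0 : ℂ) ∈ closedSector ϑ := by simp [closedSector]

lemma ne_zero_of_mem_openSector {z : ℂ} (hz : z ∈ openSector ϑ) : z ≠ 0 :=
  fun h => by simp [h, openSector] at hz

lemma im_eq_zero_or_of_mem_closedSector_sdiff {z : ℂ} (hz : z ∈ closedSector ϑ \ openSector ϑ) :
    z.im = 0 ∨ (bisectorRefl ϑ z).im = 0 := by
  by_contra! hne
  exact hz.2 ⟨hz.1.1.lt_of_ne' hne.1, hz.1.2.lt_of_ne' hne.2⟩

lemma mem_closedSector_iff (h0 : 0 < ϑ) (h1 : ϑ ≤ π) {z : ℂ} (hz : z ≠ 0) :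
    z ∈ closedSector ϑ ↔ 0 ≤ arg z ∧ arg z ≤ ϑ := by
  refine (and_congr_left' arg_nonneg_iff.symm).trans (and_congr_right fun harg => ?_)
  rw [bisectorRefl_im_eq_norm_mul_sin, mul_nonneg_iff_of_pos_left (norm_pos_iff.2 hz)]
  refine ⟨fun hsin => ?_, fun hle => ?_⟩
  · by_contra! hlt
    exact hsin.not_gt
      (Real.sin_neg_of_neg_of_neg_pi_lt (by linarith) (by linarith [arg_le_pi z]))
  · exact Real.sin_nonneg_of_nonneg_of_le_pi (by linarith) (by linarith)

lemma mem_openSector_iff (h0 : 0 < ϑ) (h1 : ϑ ≤ π) {z : ℂ} :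
    z ∈ openSector ϑ ↔ z ≠ 0 ∧ 0 < arg z ∧ arg z < ϑ := by
  constructor
  · intro hz
    have hz₀ := ne_zero_of_mem_openSector hz
    obtain ⟨ha, hb⟩ :=
      (mem_closedSector_iff h0 h1 hz₀).1 (openSector_subset_closedSector ϑ hz)
    refine ⟨hz₀, ha.lt_of_ne fun h => ?_, hb.lt_of_ne fun h => ?_⟩
    · exact hz.1.ne' (arg_eq_zero_iff.1 h.symm).2
    · exact hz.2.ne' (by rw [bisectorRefl_im_eq_norm_mul_sin, h, sub_self, Real.sin_zero, mul_zero])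
  · rintro ⟨hz, ha, hb⟩
    have hn : 0 < ‖z‖ := norm_pos_iff.2 hz
    refine ⟨?_, ?_⟩
    · rw [← norm_mul_sin_arg]
      exact mul_pos hn (Real.sin_pos_of_pos_of_lt_pi ha (by linarith))
    · rw [bisectorRefl_im_eq_norm_mul_sin]
      exact mul_pos hn (Real.sin_pos_of_pos_of_lt_pi (by linarith) (by linarith))

end Sector

/-! ### Barriers and the Phragmén–Lindelöf principle -/

/-- The branch of the `m`-th power that is real and positive on the bisector of the sector of
opening `ϑ`. -/
def sectorPow (ϑ m : ℝ) (z : ℂ) : ℂ := (z * cexp ((-(ϑ / 2) : ℝ) * I)) ^ (m : ℂ)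

section SectorPow

variable {ϑ m : ℝ}

lemma norm_sectorPow (ϑ m : ℝ) (z : ℂ) : ‖sectorPow ϑ m z‖ = ‖z‖ ^ m := by
  rw [sectorPow, norm_cpow_real, norm_mul, norm_exp_ofReal_mul_I, mul_one]

lemma abs_arg_mul_exp_le (h0 : 0 < ϑ) (h1 : ϑ < π) {z : ℂ} (hz : z ∈ closedSector ϑ)
    (hz₀ : z ≠ 0) : |arg (z * cexp ((-(ϑ / 2) : ℝ) * I))| ≤ ϑ / 2 := by
  obtain ⟨ha, hb⟩ := (mem_closedSector_iff h0 h1.le hz₀).1 hz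
  have harg : arg (cexp ((-(ϑ / 2) : ℝ) * I)) = -(ϑ / 2) := by
    rw [arg_exp_mul_I, toIocMod_eq_self]
    exact ⟨by linarith, by linarith⟩
  rw [arg_mul hz₀ (exp_ne_zero _) (by rw [harg]; exact ⟨by linarith, by linarith⟩), harg, abs_le]
  constructor <;> linarith

lemma re_mul_exp_pos (h0 : 0 < ϑ) (h1 : ϑ < π) {z : ℂ} (hz : z ∈ closedSector ϑ) (hz₀ : z ≠ 0) :
    0 < (z * cexp ((-(ϑ / 2) : ℝ) * I)).re := by
  have harg := abs_le.1 (abs_arg_mul_exp_le h0 h1 hz hz₀)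
  rw [← norm_mul_cos_arg]
  exact mul_pos (norm_pos_iff.2 (mul_ne_zero hz₀ (exp_ne_zero _)))
    (Real.cos_pos_of_mem_Ioo ⟨by linarith, by linarith⟩)

lemma cos_mul_norm_rpow_le_re_sectorPow (h0 : 0 < ϑ) (h1 : ϑ < π) (hm : 0 < m)
    (hmϑ : m * ϑ ≤ 2 * π) {z : ℂ} (hz : z ∈ closedSector ϑ) :
    Real.cos (m * (ϑ / 2)) * ‖z‖ ^ m ≤ (sectorPow ϑ m z).re := by
  rcases eq_or_ne z 0 with rfl | hz₀
  · simp [sectorPow, hm.ne', Real.zero_rpow]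
  rw [sectorPow, cpow_ofReal_re, norm_mul, norm_exp_ofReal_mul_I, mul_one, mul_comm,
    ← Real.cos_abs (_ * m), abs_mul, abs_of_pos hm, mul_comm _ m]
  gcongr
  exact Real.cos_le_cos_of_nonneg_of_le_pi (by positivity) (by linarith)
    (by gcongr; exact abs_arg_mul_exp_le h0 h1 hz hz₀)

lemma re_sectorPow_le (ϑ m : ℝ) (z : ℂ) : (sectorPow ϑ m z).re ≤ ‖z‖ ^ m :=
  (re_le_norm _).trans_eq (norm_sectorPow ϑ m z)

lemma continuousOn_sectorPow (h0 : 0 < ϑ) (h1 : ϑ < π) (hm : 0 < m) :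
    ContinuousOn (sectorPow ϑ m) (closedSector ϑ) := by
  intro z hz
  have hpow : ContinuousAt (fun x : ℂ => x ^ (m : ℂ)) (z * cexp ((-(ϑ / 2) : ℝ) * I)) := by
    rcases eq_or_ne z 0 with rfl | hz₀
    · exact continuousAt_cpow_const_of_re_pos (by simp) (by simpa using hm)
    · exact continuousAt_cpow_const (.inl (re_mul_exp_pos h0 h1 hz hz₀))
  exact (ContinuousAt.comp (f := fun z : ℂ => z * cexp ((-(ϑ / 2) : ℝ) * I)) hpow
    (by fun_prop)).continuousWithinAt

lemma hasDerivAt_sectorPow (h0 : 0 < ϑ) (h1 : ϑ < π) (m : ℝ) {z : ℂ} (hz : z ∈ openSector ϑ) :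
    HasDerivAt (sectorPow ϑ m)
      (m * (z * cexp ((-(ϑ / 2) : ℝ) * I)) ^ ((m : ℂ) - 1) * cexp ((-(ϑ / 2) : ℝ) * I)) z := by
  have hslit : z * cexp ((-(ϑ / 2) : ℝ) * I) ∈ slitPlane :=
    .inl (re_mul_exp_pos h0 h1 (openSector_subset_closedSector ϑ hz) (ne_zero_of_mem_openSector hz))
  exact ((hasDerivAt_mul_const (cexp ((-(ϑ / 2) : ℝ) * I))).cpow_const hslit)

lemma norm_deriv_sectorPow (h0 : 0 < ϑ) (h1 : ϑ < π) (hm : 0 < m) {z : ℂ}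
    (hz : z ∈ openSector ϑ) : ‖deriv (sectorPow ϑ m) z‖ = m * ‖z‖ ^ (m - 1) := by
  rw [(hasDerivAt_sectorPow h0 h1 m hz).deriv, norm_mul, norm_mul, norm_exp_ofReal_mul_I,
    Complex.norm_of_nonneg hm.le, mul_one, ← ofReal_one, ← ofReal_sub, norm_cpow_real, norm_mul,
    norm_exp_ofReal_mul_I, mul_one]

lemma analyticAt_sectorPow (h0 : 0 < ϑ) (h1 : ϑ < π) (m : ℝ) {z : ℂ} (hz : z ∈ openSector ϑ) :
    AnalyticAt ℂ (sectorPow ϑ m) z :=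
  DifferentiableOn.analyticAt
    (fun _ hy => (hasDerivAt_sectorPow h0 h1 m hy).differentiableAt.differentiableWithinAt)
    ((isOpen_openSector ϑ).mem_nhds hz)

lemma hasFrameLaplacianAt_re_sectorPow (h0 : 0 < ϑ) (h1 : ϑ < π) (m : ℝ) {z v : ℂ}
    (hz : z ∈ openSector ϑ) (hv : ‖v‖ = 1) :
    HasFrameLaplacianAt (fun y => (sectorPow ϑ m y).re) 0 z v :=
  hasFrameLaplacianAt_of_harmonicAt (analyticAt_sectorPow h0 h1 m hz).harmonicAt_re hv

lemma exists_hasFrameLaplacianAt_re_sectorPow_rpow {s : ℝ} (h0 : 0 < ϑ) (h1 : ϑ < π) (hm : 0 < m)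
    (hmϑ : m * ϑ < π) (hs0 : 0 ≤ s) (hs1 : s ≤ 1) {z v : ℂ} (hz : z ∈ openSector ϑ)
    (hv : ‖v‖ = 1) :
    ∃ L ≤ -(s * (1 - s) * m ^ 2 * ‖z‖ ^ (m * s - 2)),
      HasFrameLaplacianAt (fun y => (sectorPow ϑ m y).re ^ s) L z v := by
  have hn : 0 < ‖z‖ := norm_pos_iff.2 (ne_zero_of_mem_openSector hz)
  have hpos : 0 < (sectorPow ϑ m z).re := by
    refine lt_of_lt_of_le ?_ (cos_mul_norm_rpow_le_re_sectorPow h0 h1 hm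
      (by linarith [Real.pi_pos]) (openSector_subset_closedSector ϑ hz))
    exact mul_pos (Real.cos_pos_of_mem_Ioo ⟨by nlinarith [Real.pi_pos], by linarith⟩)
      (by positivity)
  refine ⟨_, ?_, hasFrameLaplacianAt_re_rpow (analyticAt_sectorPow h0 h1 m hz) hpos s hv⟩
  have hpow : (‖z‖ ^ m) ^ (s - 2) * (‖z‖ ^ (m - 1)) ^ 2 = ‖z‖ ^ (m * s - 2) := by
    rw [← Real.rpow_mul hn.le, ← Real.rpow_mul_natCast hn.le, ← Real.rpow_add hn]
    congr 1
    push_cast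
    ring
  have hle : (‖z‖ ^ m) ^ (s - 2) ≤ (sectorPow ϑ m z).re ^ (s - 2) :=
    Real.rpow_le_rpow_of_nonpos hpos (re_sectorPow_le ϑ m z) (by linarith)
  have hs : 0 ≤ s * (1 - s) * m ^ 2 := mul_nonneg (mul_nonneg hs0 (by linarith)) (sq_nonneg m)
  calc s * (s - 1) * (sectorPow ϑ m z).re ^ (s - 2) * ‖deriv (sectorPow ϑ m) z‖ ^ 2
      = -(s * (1 - s) * m ^ 2 *
          ((sectorPow ϑ m z).re ^ (s - 2) * (‖z‖ ^ (m - 1)) ^ 2)) := by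
        rw [norm_deriv_sectorPow h0 h1 hm hz]
        ring
    _ ≤ -(s * (1 - s) * m ^ 2 * ((‖z‖ ^ m) ^ (s - 2) * (‖z‖ ^ (m - 1)) ^ 2)) := by gcongr
    _ = _ := by rw [hpow]

lemma re_sectorPow_nonneg (h0 : 0 < ϑ) (h1 : ϑ < π) (hm : 0 < m) (hmϑ : m * ϑ ≤ π) {z : ℂ}
    (hz : z ∈ closedSector ϑ) : 0 ≤ (sectorPow ϑ m z).re :=
  (mul_nonneg (Real.cos_nonneg_of_mem_Icc ⟨by nlinarith [Real.pi_pos], by linarith⟩)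
    (by positivity)).trans
    (cos_mul_norm_rpow_le_re_sectorPow h0 h1 hm (by linarith [Real.pi_pos]) hz)

lemma sector_nonpos_of_laplacian_pos (h0 : 0 < ϑ) (h1 : ϑ < π) (hm : 0 < m) (hmϑ : m * ϑ < π)
    {w : ℂ → ℝ} {v : ℂ} (hv : ‖v‖ = 1) (hc : ContinuousOn w (closedSector ϑ))
    (hL : ∀ z ∈ openSector ϑ, ∃ L > 0, HasFrameLaplacianAt w L z v)
    (hb : ∀ z ∈ closedSector ϑ \ openSector ϑ, w z ≤ 0)
    (hgrowth : ∀ ε > 0, ∀ᶠ z in Bornology.cobounded ℂ ⊓ 𝓟 (closedSector ϑ), w z ≤ ε * ‖z‖ ^ m) :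
    ∀ z ∈ closedSector ϑ, w z ≤ 0 := by
  set c := Real.cos (m * (ϑ / 2))
  set h : ℂ → ℝ := fun z => (sectorPow ϑ m z).re
  have hc₀ : 0 < c := Real.cos_pos_of_mem_Ioo ⟨by nlinarith [Real.pi_pos], by linarith⟩
  have hch : ∀ z ∈ closedSector ϑ, c * ‖z‖ ^ m ≤ h z := fun z hz =>
    cos_mul_norm_rpow_le_re_sectorPow h0 h1 hm (by linarith [Real.pi_pos]) hz
  have hbarrier : ∀ ε > 0, ∀ z ∈ closedSector ϑ, w z ≤ ε * h z := by
    intro ε hε z hz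
    have hev := hgrowth (ε * c) (by positivity)
    rw [eventually_inf_principal, ← comap_norm_atTop,
      (atTop_basis' ‖z‖).comap _ |>.eventually_iff] at hev
    obtain ⟨ρ, hzρ, hρ⟩ := hev
    refine sub_nonpos.1 (nonpos_of_hasFrameLaplacianAt_pos (K := closedSector ϑ ∩ closedBall 0 ρ)
      (U := openSector ϑ ∩ ball 0 ρ) (w := fun y => w y - ε * h y) (v := v)
      ((isCompact_closedBall 0 ρ).inter_left (isClosed_closedSector ϑ))
      ((isOpen_openSector ϑ).inter isOpen_ball)
      (inter_subset_inter (openSector_subset_closedSector ϑ) ball_subset_closedBall) ?_ ?_ ?_ z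
      ⟨hz, by simpa using hzρ⟩)
    · have hhc := continuous_re.comp_continuousOn (continuousOn_sectorPow h0 h1 hm)
      exact (hc.fun_sub (continuousOn_const.mul hhc)).mono inter_subset_left
    · rintro y ⟨hy, -⟩
      obtain ⟨L, hL₀, hL⟩ := hL y hy
      exact ⟨L - ε * 0, by simpa using hL₀,
        hL.sub ((hasFrameLaplacianAt_re_sectorPow h0 h1 m hy hv).const_mul ε)⟩
    · rintro y ⟨⟨hy, -⟩, hyU⟩
      refine sub_nonpos.2 ?_
      by_cases hyo : y ∈ openSector ϑ
      · have hyρ : ρ ≤ ‖y‖ := by simpa using fun hlt : y ∈ ball 0 ρ => hyU ⟨hyo, hlt⟩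
        exact (hρ hyρ hy).trans ((mul_assoc ε c _).trans_le (by gcongr; exact hch y hy))
      · exact (hb y ⟨hy, hyo⟩).trans (mul_nonneg hε.le (re_sectorPow_nonneg h0 h1 hm hmϑ.le hy))
  intro z hz
  have hlim : Tendsto (fun ε : ℝ => ε * h z) (𝓝[>] 0) (𝓝 0) :=
    (Continuous.tendsto' (by fun_prop) 0 0 (by simp)).mono_left nhdsWithin_le_nhds
  refine ge_of_tendsto hlim ?_
  filter_upwards [self_mem_nhdsWithin] with ε hε using hbarrier ε hε z hz

lemma exists_sector_le_of_neg_le_laplacian {α : ℝ} (h0 : 0 < ϑ) (h1 : ϑ < π) (hα : 0 ≤ α)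
    (hαm : 2 + α < m) (hmϑ : m * ϑ < π) :
    ∃ C > 0, ∀ {w : ℂ → ℝ} {v : ℂ} {K : ℝ}, ‖v‖ = 1 → 0 < K → ContinuousOn w (closedSector ϑ) →
      (∀ z ∈ openSector ϑ, ∃ L, -(K * ‖z‖ ^ α) ≤ L ∧ HasFrameLaplacianAt w L z v) →
      (∀ z ∈ closedSector ϑ \ openSector ϑ, w z ≤ 0) →
      (∀ ε > 0, ∀ᶠ z in Bornology.cobounded ℂ ⊓ 𝓟 (closedSector ϑ), w z ≤ ε * ‖z‖ ^ m) →
      ∀ z ∈ closedSector ϑ, w z ≤ C * K * ‖z‖ ^ (2 + α) := by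
  have hm : 0 < m := by linarith
  set s := (2 + α) / m with hs
  have hms : m * s = 2 + α := by rw [hs]; field_simp
  have hs0 : 0 < s := by positivity
  have hs1 : s < 1 := (div_lt_one hm).2 hαm
  have hs1' : 0 < 1 - s := sub_pos.2 hs1
  set B := s * (1 - s) * m ^ 2
  have hB : 0 < B := by positivity
  set h : ℂ → ℝ := fun z => (sectorPow ϑ m z).re
  have hh₀ : ∀ z ∈ closedSector ϑ, 0 ≤ h z := fun z hz => re_sectorPow_nonneg h0 h1 hm hmϑ.le hz
  refine ⟨2 / B, by positivity, fun {w v K} hv hK hc hL hb hgrowth z hz => ?_⟩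
  suffices hle : w z - 2 / B * K * h z ^ s ≤ 0 by
    refine (sub_nonpos.1 hle).trans ?_
    rw [← hms, Real.rpow_mul (norm_nonneg z)]
    gcongr
    exacts [hh₀ z hz, re_sectorPow_le ϑ m z]
  have hhs : ∀ y ∈ closedSector ϑ, 0 ≤ 2 / B * K * h y ^ s := fun y hy =>
    mul_nonneg (by positivity) (Real.rpow_nonneg (hh₀ y hy) s)
  refine sector_nonpos_of_laplacian_pos (w := fun y => w y - 2 / B * K * h y ^ s) h0 h1 hm hmϑ hv
    ?_ (fun y hy => ?_) (fun y hy => by linarith [hb y hy, hhs y hy.1]) (fun ε hε => ?_) z hz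
  · have hhc := continuous_re.comp_continuousOn (continuousOn_sectorPow h0 h1 hm)
    exact hc.fun_sub (continuousOn_const.mul (hhc.rpow_const fun _ _ => .inr hs0.le))
  · obtain ⟨L₁, hL₁, hwL⟩ := hL y hy
    obtain ⟨L₂, hL₂, hhL⟩ :=
      exists_hasFrameLaplacianAt_re_sectorPow_rpow h0 h1 hm hmϑ hs0.le hs1.le hy hv
    refine ⟨_, ?_, hwL.sub (hhL.const_mul (2 / B * K))⟩
    have hy₀ : 0 < ‖y‖ ^ α :=
      Real.rpow_pos_of_pos (norm_pos_iff.2 (ne_zero_of_mem_openSector hy)) _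
    rw [hms, add_sub_cancel_left] at hL₂
    have hL₂' : 2 / B * K * L₂ ≤ -(2 * (K * ‖y‖ ^ α)) :=
      calc 2 / B * K * L₂ ≤ 2 / B * K * -(B * ‖y‖ ^ α) := by gcongr
        _ = _ := by field_simp
    nlinarith [mul_pos hK hy₀]
  · filter_upwards [hgrowth ε hε, mem_inf_of_right (mem_principal_self _)] with y hy hyS
    linarith [hhs y hyS]

end SectorPow

/-! ### The corner estimate -/

open Asymptotics Bornology

/-- The Dirichlet problem `Δu = f` on the sector of opening `ϑ`, with `f` of Hölder exponent `α`
and constant `K`, and `u = o(‖z‖ ^ m)` at infinity for all `m > 2`, as the growth bound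
`‖z‖ ^ 2 * log ‖z‖` implies. -/
structure IsSectorSolution (ϑ α K : ℝ) (f u : ℂ → ℝ) : Prop where
  continuousOn : ContinuousOn u (closedSector ϑ)
  laplacian : ∀ z ∈ openSector ϑ, ∀ v : ℂ, ‖v‖ = 1 → HasFrameLaplacianAt u (f z) z v
  eq_zero : ∀ z ∈ closedSector ϑ \ openSector ϑ, u z = 0
  holder : ∀ z ∈ closedSector ϑ, ∀ w ∈ closedSector ϑ, |f z - f w| ≤ K * ‖z - w‖ ^ α
  growth : ∀ m : ℝ, 2 < m → u =o[cobounded ℂ ⊓ 𝓟 (closedSector ϑ)] fun z => ‖z‖ ^ m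

/-- The quadratic polynomial with Laplacian `a` that vanishes on both edges of the sector. -/
def cornerQuad (ϑ a : ℝ) (z : ℂ) : ℝ :=
  -(a / (2 * Real.cos ϑ)) * (z.im * (bisectorRefl ϑ z).im)

lemma norm_sq_mul_log_isLittleO {m : ℝ} (hm : 2 < m) :
    (fun z : ℂ => ‖z‖ ^ 2 * Real.log (Real.exp 1 + ‖z‖)) =o[cobounded ℂ] fun z => ‖z‖ ^ m := by
  have hO : (fun x => Real.log (Real.exp 1 + x)) =O[atTop] Real.log := by
    refine .of_bound 2 ?_
    filter_upwards [eventually_ge_atTop (Real.exp 1), eventually_ge_atTop 2] with x hx hx₂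
    have hlog : Real.log (Real.exp 1 + x) ≤ Real.log (x ^ 2) :=
      Real.log_le_log (by positivity) (by nlinarith)
    rw [Real.norm_of_nonneg (Real.log_nonneg (by linarith [Real.exp_pos 1])),
      Real.norm_of_nonneg (Real.log_nonneg (by linarith))]
    simpa using hlog
  have hlog := hO.trans_isLittleO (isLittleO_log_rpow_atTop (sub_pos.2 hm))
  refine IsLittleO.congr' (((isBigO_refl (fun x : ℝ => x ^ 2) atTop).mul_isLittleO
    hlog).comp_tendsto tendsto_norm_cobounded_atTop) .rfl ?_
  filter_upwards [eventually_ne_cobounded (0 : ℂ)] with z hz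
  simp only [Function.comp_apply]
  rw [← Real.rpow_two, ← Real.rpow_add (norm_pos_iff.2 hz), add_sub_cancel]

section CornerQuad

variable {ϑ : ℝ}

lemma isQuadratic_cornerQuad (hϑ : 0 < Real.cos ϑ) (a : ℝ) : IsQuadratic (cornerQuad ϑ a) a := by
  refine ⟨0, 0, ⟨-(a / 4), a / 4 * (Real.sin ϑ / Real.cos ϑ)⟩, fun z => ?_⟩
  simp only [cornerQuad, bisectorRefl_im, Complex.sq_norm, normSq_apply]
  simp [pow_two]
  field_simp
  ring

lemma cornerQuad_eq_zero (a : ℝ) {z : ℂ} (hz : z.im = 0 ∨ (bisectorRefl ϑ z).im = 0) :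
    cornerQuad ϑ a z = 0 := by
  rw [cornerQuad, mul_eq_zero.2 hz, mul_zero]

lemma abs_cornerQuad_le (hϑ : 0 < Real.cos ϑ) (a : ℝ) (z : ℂ) :
    |cornerQuad ϑ a z| ≤ |a| / (2 * Real.cos ϑ) * ‖z‖ ^ 2 := by
  have hrefl := abs_im_le_norm (bisectorRefl ϑ z)
  rw [LinearIsometryEquiv.norm_map] at hrefl
  rw [cornerQuad, abs_mul, abs_neg, abs_div, abs_of_pos (by positivity : 0 < 2 * Real.cos ϑ),
    abs_mul, pow_two]
  gcongr
  exact abs_im_le_norm z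

lemma cornerQuad_isLittleO (hϑ : 0 < Real.cos ϑ) (a : ℝ) {m : ℝ} (hm : 2 < m) :
    cornerQuad ϑ a =o[cobounded ℂ] fun z => ‖z‖ ^ m := by
  refine IsBigO.trans_isLittleO (.of_bound (|a| / (2 * Real.cos ϑ)) (.of_forall fun z => ?_))
    (norm_sq_mul_log_isLittleO hm)
  have hlog : 1 ≤ Real.log (Real.exp 1 + ‖z‖) :=
    (Real.le_log_iff_exp_le (by positivity)).2 (le_add_of_nonneg_right (norm_nonneg z))
  refine (abs_cornerQuad_le hϑ a z).trans (mul_le_mul_of_nonneg_left ?_ (by positivity))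
  exact (le_mul_of_one_le_right (by positivity) hlog).trans (le_abs_self _)

end CornerQuad

namespace IsSectorSolution

variable {ϑ α : ℝ}

lemma comp_bisectorRefl {K : ℝ} {f u : ℂ → ℝ} (h : IsSectorSolution ϑ α K f u) :
    IsSectorSolution ϑ α K (fun z => f (bisectorRefl ϑ z)) fun z => u (bisectorRefl ϑ z) where
  continuousOn := h.continuousOn.comp (bisectorRefl ϑ).continuous.continuousOn
    fun _ hz => bisectorRefl_mem_closedSector.2 hz
  laplacian z hz v hv :=
    HasFrameLaplacianAt.comp_antilinear (A := (bisectorRefl ϑ).toLinearEquiv.toLinearMap)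
      (bisectorRefl_I_mul ϑ)
      (h.laplacian _ (bisectorRefl_mem_openSector.2 hz) _
        (by rw [← hv]; exact (bisectorRefl ϑ).norm_map v))
  eq_zero z hz := h.eq_zero _
    ⟨bisectorRefl_mem_closedSector.2 hz.1, fun hz' => hz.2 (bisectorRefl_mem_openSector.1 hz')⟩
  holder z hz w hw := by
    simpa only [← map_sub, LinearIsometryEquiv.norm_map] using
      h.holder _ (bisectorRefl_mem_closedSector.2 hz) _ (bisectorRefl_mem_closedSector.2 hw)
  growth m hm := by
    have hlim : Tendsto (bisectorRefl ϑ) (cobounded ℂ ⊓ 𝓟 (closedSector ϑ))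
        (cobounded ℂ ⊓ 𝓟 (closedSector ϑ)) :=
      (bisectorRefl ϑ).antilipschitz.tendsto_cobounded.inf
        (tendsto_principal_principal.2 fun _ hz => bisectorRefl_mem_closedSector.2 hz)
    simpa only [Function.comp_def, LinearIsometryEquiv.norm_map] using
      (h.growth m hm).comp_tendsto hlim

/-- The barrier of exponent `2 + α` dominates the difference to the corner quadratic because
`2 + α` is below the critical exponent `π / ϑ` of the sector. -/
theorem exists_abs_sub_cornerQuad_le (h0 : 0 < ϑ) (h1 : ϑ < π / 2) (hα : 0 ≤ α)
    (hαϑ : (2 + α) * ϑ < π) : ∃ C > 0, ∀ {K : ℝ} {f u : ℂ → ℝ}, 0 < K →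
      IsSectorSolution ϑ α K f u → ∀ z ∈ closedSector ϑ,
        |u z - cornerQuad ϑ (f 0) z| ≤ C * K * ‖z‖ ^ (2 + α) := by
  obtain ⟨m, hαm, hm⟩ := exists_between ((lt_div_iff₀ h0).2 hαϑ)
  obtain ⟨C, hC, hbarrier⟩ := exists_sector_le_of_neg_le_laplacian h0 (by linarith) hα hαm
    ((lt_div_iff₀ h0).1 hm)
  refine ⟨C, hC, fun {K f u} hK hu => ?_⟩
  have hcos : 0 < Real.cos ϑ := Real.cos_pos_of_mem_Ioo ⟨by linarith, h1⟩
  have hq := isQuadratic_cornerQuad hcos (f 0)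
  set w : ℂ → ℝ := fun z => u z - cornerQuad ϑ (f 0) z
  have hw : w =o[cobounded ℂ ⊓ 𝓟 (closedSector ϑ)] fun z => ‖z‖ ^ m :=
    (hu.growth m (by linarith)).sub
      ((cornerQuad_isLittleO hcos (f 0) (by linarith)).mono inf_le_left)
  have hsigned : ∀ σ : ℝ, |σ| = 1 → ∀ z ∈ closedSector ϑ, σ * w z ≤ C * K * ‖z‖ ^ (2 + α) := by
    intro σ hσ
    refine hbarrier norm_one hK
      (continuousOn_const.mul (hu.continuousOn.fun_sub hq.continuous.continuousOn))
      (fun z hz => ⟨_, ?_, ((hu.laplacian z hz 1 norm_one).sub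
        (hq.hasFrameLaplacianAt z norm_one)).const_mul σ⟩) (fun z hz => ?_) fun ε hε => ?_
    · have hf := hu.holder z (openSector_subset_closedSector ϑ hz) 0 (zero_mem_closedSector ϑ)
      rw [sub_zero, ← one_mul |_|, ← hσ, ← abs_mul] at hf
      exact (abs_le.1 hf).1
    · have hq₀ := cornerQuad_eq_zero (f 0) (im_eq_zero_or_of_mem_closedSector_sdiff hz)
      simp only [w, hu.eq_zero z hz, hq₀, sub_zero, mul_zero, le_refl]
    · filter_upwards [hw.bound hε] with z hz
      refine (le_abs_self _).trans ?_
      rwa [abs_mul, hσ, one_mul, ← Real.norm_eq_abs,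
        ← Real.norm_of_nonneg (by positivity : 0 ≤ ‖z‖ ^ m)]
  exact fun z hz => abs_le'.2 ⟨(one_mul (w z)).symm.trans_le (hsigned 1 (by simp) z hz),
    (neg_one_mul (w z)).symm.trans_le (hsigned (-1) (by simp) z hz)⟩

end IsSectorSolution

/-! ### Quadratic approximation at every point of the sector -/

/-- `q` is a quadratic polynomial that approximates a solution `u` on the set `D` to the accuracy
that `C^{2,α}` regularity predicts at scale `r`; its Laplacian approximates the value `c` of the
right-hand side. -/
structure IsQuadraticApprox (u q : ℂ → ℝ) (D : Set ℂ) (c α A r : ℝ) : Prop where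
  exists_isQuadratic : ∃ e, IsQuadratic q e ∧ |e - c| ≤ A * r ^ α
  abs_sub_le : ∀ z ∈ D, |u z - q z| ≤ A * r ^ (2 + α)

namespace IsQuadraticApprox

variable {u q : ℂ → ℝ} {D D' : Set ℂ} {c c' α A B r r' : ℝ}

lemma nonneg (h : IsQuadraticApprox u q D c α A r) (hr : 0 < r) : 0 ≤ A := by
  obtain ⟨e, -, he⟩ := h.exists_isQuadratic
  exact nonneg_of_mul_nonneg_left ((abs_nonneg _).trans he) (Real.rpow_pos_of_pos hr α)

lemma rescale (h : IsQuadraticApprox u q D c α A r) (hD : D' ⊆ D) (hα : 0 ≤ α)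
    (hr : 0 < r) (hr' : 0 < r') {T : ℝ} (hT : 1 ≤ T) (hrT : r ≤ T * r')
    (hc : |c - c'| ≤ B * r' ^ α) : IsQuadraticApprox u q D' c' α (A * T ^ (2 + α) + B) r' := by
  have hA := h.nonneg hr
  have hB : 0 ≤ B :=
    nonneg_of_mul_nonneg_left ((abs_nonneg _).trans hc) (Real.rpow_pos_of_pos hr' α)
  have hpow : ∀ γ, 0 ≤ γ → γ ≤ 2 + α → A * r ^ γ ≤ A * T ^ (2 + α) * r' ^ γ := fun γ hγ hγα =>
    calc A * r ^ γ ≤ A * (T * r') ^ γ := by gcongr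
      _ = A * T ^ γ * r' ^ γ := by rw [Real.mul_rpow (by positivity) hr'.le, mul_assoc]
      _ ≤ A * T ^ (2 + α) * r' ^ γ := by gcongr
  obtain ⟨e, hq, he⟩ := h.exists_isQuadratic
  refine ⟨⟨e, hq, ?_⟩, fun z hz => (h.abs_sub_le z (hD hz)).trans ?_⟩
  · calc |e - c'| ≤ |e - c| + |c - c'| := _root_.abs_sub_le e c c'
      _ ≤ A * T ^ (2 + α) * r' ^ α + B * r' ^ α :=
        add_le_add (he.trans (hpow α hα (le_add_of_nonneg_left two_pos.le))) hc
      _ = _ := by ring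
  · have hBr : 0 ≤ B * r' ^ (2 + α) := by positivity
    linarith [hpow (2 + α) (by positivity) le_rfl]

lemma mono_set (h : IsQuadraticApprox u q D c α A r) (hD : D' ⊆ D) :
    IsQuadraticApprox u q D' c α A r :=
  ⟨h.exists_isQuadratic, fun z hz => h.abs_sub_le z (hD hz)⟩

lemma mono (h : IsQuadraticApprox u q D c α A r) (hr : 0 ≤ r) (hAB : A ≤ B) :
    IsQuadraticApprox u q D c α B r := by
  obtain ⟨e, hq, he⟩ := h.exists_isQuadratic
  exact ⟨⟨e, hq, he.trans (by gcongr)⟩, fun z hz => (h.abs_sub_le z hz).trans (by gcongr)⟩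

/-- Adding a multiple of `(z.im - p.im) ^ 2` keeps the values on the horizontal line through
`p`, where the odd reflection needs them to vanish. -/
lemma exists_isQuadratic_add_mul_sq (h : IsQuadraticApprox u q D c α A r) {p : ℂ}
    (hD : D ⊆ closedBall p r) (hr : 0 < r) :
    ∃ b, IsQuadratic (fun z => q z + b * (z.im - p.im) ^ 2) c ∧
      ∀ z ∈ D, |u z - (q z + b * (z.im - p.im) ^ 2)| ≤ 2 * A * r ^ (2 + α) := by
  obtain ⟨e, hq, he⟩ := h.exists_isQuadratic
  have hsq : IsQuadratic (fun z : ℂ => z.im ^ 2) 2 :=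
    ⟨0, 0, -(1 / 2), fun z => by
      rw [Complex.sq_norm, normSq_apply]
      simp [pow_two]
      ring⟩
  refine ⟨(c - e) / 2, by simpa using hq.add ((hsq.translate p).const_mul ((c - e) / 2)),
    fun z hz => ?_⟩
  have hz' : |z.im - p.im| ≤ r :=
    (abs_im_le_norm (z - p)).trans (mem_closedBall_iff_norm.1 (hD hz))
  have hb : |(c - e) / 2 * (z.im - p.im) ^ 2| ≤ A * r ^ (2 + α) :=
    calc |(c - e) / 2 * (z.im - p.im) ^ 2| = |e - c| / 2 * |z.im - p.im| ^ 2 := by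
          rw [abs_mul, abs_pow, abs_div, abs_two, abs_sub_comm]
      _ ≤ A * r ^ α * r ^ 2 := by
          have := abs_nonneg (e - c)
          gcongr <;> linarith
      _ = A * r ^ (2 + α) := by rw [add_comm, Real.rpow_add hr, Real.rpow_two, mul_assoc]
  rw [← sub_sub]
  linarith [abs_sub (u z - q z) ((c - e) / 2 * (z.im - p.im) ^ 2), h.abs_sub_le z hz]

end IsQuadraticApprox

section Improvement

variable {α : ℝ}

lemma exists_isQuadraticApprox_of_closedBall (hα0 : 0 ≤ α) (hα1 : α < 1) (M : ℝ) :
    ∃ C > 0, ∀ {u f q : ℂ → ℝ} {p : ℂ} {R K : ℝ}, 0 < K → ContinuousOn u (closedBall p R) →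
      (∀ z ∈ ball p R, HasFrameLaplacianAt u (f z) z 1) →
      (∀ z ∈ ball p R, |f z - f p| ≤ K * ‖z - p‖ ^ α) →
      IsQuadraticApprox u q (closedBall p R) (f p) α (M * K) R →
      ∀ r, 0 < r → r ≤ R → ∃ q', IsQuadraticApprox u q' (closedBall p r) (f p) α (C * K) r := by
  obtain ⟨C, hC, happrox⟩ := exists_isQuadratic_of_abs_laplacian_le hα0 hα1 (2 * M)
  refine ⟨C, hC, fun {u f q p R K} hK hu hL hf hq r hr hrR => ?_⟩
  obtain ⟨b, hb, hub⟩ := hq.exists_isQuadratic_add_mul_sq subset_rfl (hr.trans_le hrR)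
  obtain ⟨q', hq', huq'⟩ := happrox norm_one hK (hu.fun_sub hb.continuous.continuousOn)
    (fun z hz => ⟨_, hf z hz, (hL z hz).sub (hb.hasFrameLaplacianAt z norm_one)⟩)
    (fun z hz => (hub z hz).trans_eq (by ring)) r hr hrR
  refine ⟨_, ⟨_, hb.add hq', ?_⟩, fun z hz => ?_⟩
  · rw [add_zero, sub_self, abs_zero]
    positivity
  · rw [← sub_sub]
    exact huq' z hz

lemma exists_isQuadraticApprox_of_closedBall_inter (hα0 : 0 ≤ α) (hα1 : α < 1) (M : ℝ) :
    ∃ C > 0, ∀ {u f q : ℂ → ℝ} {p : ℂ} {R K : ℝ}, p.im = 0 → 0 < K →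
      ContinuousOn u (closedBall p R ∩ {z | 0 ≤ z.im}) →
      (∀ z ∈ closedBall p R, z.im = 0 → u z = 0 ∧ q z = 0) →
      (∀ z ∈ ball p R, 0 < z.im → HasFrameLaplacianAt u (f z) z 1) →
      (∀ z ∈ ball p R, 0 < z.im → |f z - f p| ≤ K * ‖z - p‖ ^ α) →
      IsQuadraticApprox u q (closedBall p R ∩ {z | 0 ≤ z.im}) (f p) α (M * K) R →
      ∀ r, 0 < r → r ≤ R →
        ∃ q', IsQuadraticApprox u q' (closedBall p r ∩ {z | 0 ≤ z.im}) (f p) α (C * K) r := by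
  obtain ⟨C, hC, happrox⟩ := exists_isQuadratic_of_abs_laplacian_le hα0 hα1 (2 * M)
  refine ⟨C, hC, fun {u f q p R K} hp hK hu h0 hL hf hq r hr hrR => ?_⟩
  obtain ⟨b, hb, hub⟩ := hq.exists_isQuadratic_add_mul_sq inter_subset_left (hr.trans_le hrR)
  set w : ℂ → ℝ := fun z => u z - (q z + b * (z.im - p.im) ^ 2)
  have hw₀ : ∀ z ∈ closedBall p R, z.im = 0 → w z = 0 := fun z hz him => by
    simp [w, h0 z hz him, him, hp]
  obtain ⟨q', hq', huq'⟩ := happrox (w := oddExt w) norm_one hK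
    (continuousOn_oddExt hp (hu.fun_sub hb.continuous.continuousOn) hw₀)
    (exists_hasFrameLaplacianAt_oddExt (φ := fun x => K * x ^ α) hp (fun x hx => by positivity)
      (fun z hz => hw₀ z (ball_subset_closedBall hz)) fun z hz him =>
        ⟨_, hf z hz him, (hL z hz him).sub (hb.hasFrameLaplacianAt z norm_one)⟩)
    (abs_oddExt_le hp fun z hz => (hub z hz).trans_eq (by ring)) r hr hrR
  refine ⟨_, ⟨_, hb.add hq', ?_⟩, fun z hz => ?_⟩
  · rw [add_zero, sub_self, abs_zero]
    positivity
  · have hwz : oddExt w z = u z - (q z + b * (z.im - p.im) ^ 2) := oddExt_of_nonneg w hz.2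
    rw [← sub_sub, ← hwz]
    exact huq' z hz.1

end Improvement

section SectorGeometry

variable {ϑ r : ℝ} {p z : ℂ}

lemma abs_bisectorRefl_im_sub_le (ϑ : ℝ) (z p : ℂ) :
    |(bisectorRefl ϑ z).im - (bisectorRefl ϑ p).im| ≤ ‖z - p‖ := by
  rw [← sub_im, ← map_sub, ← (bisectorRefl ϑ).norm_map (z - p)]
  exact abs_im_le_norm _

lemma mem_closedSector_of_mem_closedBall (hr : r ≤ (bisectorRefl ϑ p).im)
    (hz : z ∈ closedBall p r) (him : 0 ≤ z.im) : z ∈ closedSector ϑ := by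
  have hz' := mem_closedBall_iff_norm.1 hz
  exact ⟨him, by linarith [(abs_le.1 (abs_bisectorRefl_im_sub_le ϑ z p)).1]⟩

lemma mem_openSector_of_mem_ball (hr : r ≤ (bisectorRefl ϑ p).im)
    (hz : z ∈ ball p r) (him : 0 < z.im) : z ∈ openSector ϑ := by
  have hz' := mem_ball_iff_norm.1 hz
  exact ⟨him, by linarith [(abs_le.1 (abs_bisectorRefl_im_sub_le ϑ z p)).1]⟩

lemma ball_subset_openSector (hr : r ≤ (bisectorRefl ϑ p).im) (hr' : r ≤ p.im) :
    ball p r ⊆ openSector ϑ := fun z hz => by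
  have him := (abs_le.1 (abs_im_le_norm (z - p))).1
  rw [sub_im] at him
  exact mem_openSector_of_mem_ball hr hz (by linarith [mem_ball_iff_norm.1 hz])

lemma closedBall_subset_closedSector (hr : r ≤ (bisectorRefl ϑ p).im) (hr' : r ≤ p.im) :
    closedBall p r ⊆ closedSector ϑ := fun z hz => by
  have him := (abs_le.1 (abs_im_le_norm (z - p))).1
  rw [sub_im] at him
  exact mem_closedSector_of_mem_closedBall hr hz (by linarith [mem_closedBall_iff_norm.1 hz])

lemma bisectorRefl_im_of_im_eq_zero (hϑ : 0 < Real.sin ϑ) (hp : p ∈ closedSector ϑ)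
    (him : p.im = 0) : (bisectorRefl ϑ p).im = ‖p‖ * Real.sin ϑ := by
  have hre := hp.2
  rw [bisectorRefl_im, him, mul_zero, sub_zero] at hre ⊢
  rw [← abs_re_eq_norm.2 him, abs_of_nonneg (nonneg_of_mul_nonneg_right hre hϑ), mul_comm]

lemma IsQuadratic.comp_bisectorRefl {q : ℂ → ℝ} {e : ℝ} (h : IsQuadratic q e) (ϑ : ℝ) :
    IsQuadratic (fun z => q (bisectorRefl ϑ z)) e := by
  obtain ⟨c₀, c₁, c₂, hq⟩ := h
  refine ⟨conj c₀, conj (c₁ * cexp (ϑ * I)), conj (c₂ * cexp (ϑ * I) ^ 2), fun z => ?_⟩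
  simp only [hq, LinearIsometryEquiv.norm_map]
  rw [← conj_re, bisectorRefl_apply]
  simp only [map_add, map_mul, map_pow, conj_conj]
  ring_nf

end SectorGeometry

namespace IsSectorSolution

variable {ϑ α : ℝ}

lemma isQuadraticApprox_recenter {K A T r R : ℝ} {f u q : ℂ → ℝ} {D : Set ℂ} {a p : ℂ}
    (hu : IsSectorSolution ϑ α K f u) (hK : 0 < K) (hα : 0 ≤ α)
    (ha : a ∈ closedSector ϑ) (hp : p ∈ closedSector ϑ) (hr : 0 < r) (hT : 1 ≤ T)
    (hRT : R ≤ T * r) (hpa : ‖a - p‖ + r ≤ R)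
    (h : IsQuadraticApprox u q (closedBall a R ∩ D) (f a) α (A * K) R) :
    IsQuadraticApprox u q (closedBall p r ∩ D) (f p) α ((A * T ^ (2 + α) + T ^ α) * K) r := by
  have hball : closedBall p r ⊆ closedBall a R :=
    closedBall_subset_closedBall' (by rwa [add_comm, dist_comm, dist_eq_norm])
  have hc : |f a - f p| ≤ T ^ α * K * r ^ α :=
    calc |f a - f p| ≤ K * ‖a - p‖ ^ α := hu.holder a ha p hp
      _ ≤ K * (T * r) ^ α := by gcongr; linarith
      _ = T ^ α * K * r ^ α := by rw [Real.mul_rpow (by positivity) hr.le]; ring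
  exact (h.rescale (inter_subset_inter_left D hball) hα
    (by linarith [norm_nonneg (a - p)]) hr hT hRT hc).mono hr.le (by linarith)

lemma exists_isQuadraticApprox_cornerQuad (h0 : 0 < ϑ) (h1 : ϑ < π / 2) (hα : 0 ≤ α)
    (hαϑ : (2 + α) * ϑ < π) {T : ℝ} (hT : 1 ≤ T) : ∃ C > 0, ∀ {K : ℝ} {f u : ℂ → ℝ}, 0 < K →
      IsSectorSolution ϑ α K f u → ∀ p ∈ closedSector ϑ, ∀ r, 0 < r → ‖p‖ ≤ T * r →
        IsQuadraticApprox u (cornerQuad ϑ (f 0)) (closedBall p r ∩ closedSector ϑ) (f p) α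
          (C * K) r := by
  obtain ⟨C, hC, hcorner⟩ := exists_abs_sub_cornerQuad_le h0 h1 hα hαϑ
  refine ⟨C * (T + 1) ^ (2 + α) + (T + 1) ^ α, by positivity,
    fun {K f u} hK hu p hp r hr hpr => ?_⟩
  have hcos : 0 < Real.cos ϑ := Real.cos_pos_of_mem_Ioo ⟨by linarith, h1⟩
  refine hu.isQuadraticApprox_recenter hK hα (zero_mem_closedSector ϑ) hp hr (by linarith)
    le_rfl (by rw [zero_sub, norm_neg]; linarith)
    ⟨⟨_, isQuadratic_cornerQuad hcos (f 0), by rw [sub_self, abs_zero]; positivity⟩,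
      fun z hz => (hcorner hK hu z hz.2).trans ?_⟩
  gcongr
  exact mem_closedBall_zero_iff.1 hz.1

lemma exists_isQuadraticApprox_of_im_eq_zero (h0 : 0 < ϑ) (h1 : ϑ < π / 2) (hα0 : 0 ≤ α)
    (hα1 : α < 1) (hαϑ : (2 + α) * ϑ < π) : ∃ C > 0, ∀ {K : ℝ} {f u : ℂ → ℝ}, 0 < K →
      IsSectorSolution ϑ α K f u → ∀ p ∈ closedSector ϑ, p.im = 0 → ∀ r, 0 < r →
        ∃ q, IsQuadraticApprox u q (closedBall p r ∩ closedSector ϑ) (f p) α (C * K) r := by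
  have hsin : 0 < Real.sin ϑ := Real.sin_pos_of_pos_of_lt_pi h0 (by linarith)
  obtain ⟨C₁, hC₁, hcorner⟩ := exists_isQuadraticApprox_cornerQuad h0 h1 hα0 hαϑ
    (one_le_inv_iff₀.2 ⟨hsin, Real.sin_le_one ϑ⟩)
  obtain ⟨C₂, -, hedge⟩ := exists_isQuadraticApprox_of_closedBall_inter hα0 hα1 C₁
  refine ⟨max C₁ C₂, by positivity, fun {K f u} hK hu p hp him r hr => ?_⟩
  have hR := bisectorRefl_im_of_im_eq_zero hsin hp him
  set R := (bisectorRefl ϑ p).im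
  have hcornerR : ∀ s, 0 < s → R ≤ s → IsQuadraticApprox u (cornerQuad ϑ (f 0))
      (closedBall p s ∩ closedSector ϑ) (f p) α (C₁ * K) s := fun s hs hRs =>
    hcorner hK hu p hp s hs (by rwa [le_inv_mul_iff₀ hsin, mul_comm, ← hR])
  rcases le_or_gt R r with hRr | hrR
  · exact ⟨_, (hcornerR r hr hRr).mono hr.le (by gcongr; exact le_max_left _ _)⟩
  · have hsub : closedBall p R ∩ {z | 0 ≤ z.im} ⊆ closedSector ϑ := fun z hz =>
      mem_closedSector_of_mem_closedBall le_rfl hz.1 hz.2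
    have hopen : ∀ z ∈ ball p R, 0 < z.im → z ∈ openSector ϑ := fun z hz =>
      mem_openSector_of_mem_ball le_rfl hz
    obtain ⟨q, hq⟩ := hedge (u := u) (f := f) him hK (hu.continuousOn.mono hsub)
      (fun z hz hz₀ => ⟨hu.eq_zero z ⟨hsub ⟨hz, hz₀.ge⟩, fun hz' => hz'.1.ne' hz₀⟩,
        cornerQuad_eq_zero (f 0) (.inl hz₀)⟩)
      (fun z hz hz₀ => hu.laplacian z (hopen z hz hz₀) 1 norm_one)
      (fun z hz hz₀ => hu.holder z (openSector_subset_closedSector ϑ (hopen z hz hz₀)) p hp)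
      ((hcornerR R (hr.trans hrR) le_rfl).mono_set fun z hz => ⟨hz.1, hsub hz⟩) r hr hrR.le
    exact ⟨q, (hq.mono_set (inter_subset_inter_right _ fun z hz => hz.1)).mono hr.le
      (by gcongr; exact le_max_right _ _)⟩

lemma exists_isQuadraticApprox_of_im_le (h0 : 0 < ϑ) (h1 : ϑ < π / 2) (hα0 : 0 ≤ α)
    (hα1 : α < 1) (hαϑ : (2 + α) * ϑ < π) : ∃ C > 0, ∀ {K : ℝ} {f u : ℂ → ℝ}, 0 < K →
      IsSectorSolution ϑ α K f u → ∀ p ∈ closedSector ϑ, p.im ≤ (bisectorRefl ϑ p).im →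
        ∀ r, 0 < r →
          ∃ q, IsQuadraticApprox u q (closedBall p r ∩ closedSector ϑ) (f p) α (C * K) r := by
  have hsin : 0 < Real.sin ϑ := Real.sin_pos_of_pos_of_lt_pi h0 (by linarith)
  have hcos : 0 < Real.cos ϑ := Real.cos_pos_of_mem_Ioo ⟨by linarith, h1⟩
  obtain ⟨A, hA, hedge⟩ := exists_isQuadraticApprox_of_im_eq_zero h0 h1 hα0 hα1 hαϑ
  set C₁ := A * 2 ^ (2 + α) + 2 ^ α
  obtain ⟨C₂, -, hball⟩ := exists_isQuadraticApprox_of_closedBall hα0 hα1 C₁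
  refine ⟨max C₁ C₂, by positivity, fun {K f u} hK hu p hp hle r hr => ?_⟩
  have hre : (p.re : ℂ) ∈ closedSector ϑ := by
    refine ⟨(ofReal_im p.re).ge, ?_⟩
    have hre := hle
    rw [bisectorRefl_im] at hre ⊢
    rw [ofReal_re, ofReal_im]
    nlinarith [hp.1]
  have hdist : ‖(p.re : ℂ) - p‖ = p.im := by
    rw [norm_sub_rev, ← abs_of_nonneg hp.1, ← abs_im_eq_norm.2 (by simp)]
    simp
  have hfar : ∀ s, 0 < s → p.im ≤ s → ∃ q, IsQuadraticApprox u q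
      (closedBall p s ∩ closedSector ϑ) (f p) α (C₁ * K) s := fun s hs hps => by
    obtain ⟨q, hq⟩ := hedge hK hu _ hre (ofReal_im _) (2 * s) (by positivity)
    exact ⟨q, hu.isQuadraticApprox_recenter hK hα0 hre hp hs one_le_two le_rfl
      (by linarith) hq⟩
  rcases le_or_gt p.im r with hpr | hrp
  · obtain ⟨q, hq⟩ := hfar r hr hpr
    exact ⟨q, hq.mono hr.le (by gcongr; exact le_max_left _ _)⟩
  · have hsub := closedBall_subset_closedSector hle le_rfl
    have hopen := ball_subset_openSector hle le_rfl
    obtain ⟨q, hq⟩ := hfar p.im (hr.trans hrp) le_rfl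
    rw [inter_eq_left.2 hsub] at hq
    obtain ⟨q', hq'⟩ := hball hK (hu.continuousOn.mono hsub)
      (fun z hz => hu.laplacian z (hopen hz) 1 norm_one)
      (fun z hz => hu.holder z (openSector_subset_closedSector ϑ (hopen hz)) p hp) hq r hr hrp.le
    exact ⟨q', (hq'.mono_set inter_subset_left).mono hr.le (by gcongr; exact le_max_right _ _)⟩

theorem exists_isQuadraticApprox (h0 : 0 < ϑ) (h1 : ϑ < π / 2) (hα0 : 0 ≤ α)
    (hα1 : α < 1) (hαϑ : (2 + α) * ϑ < π) : ∃ C > 0, ∀ {K : ℝ} {f u : ℂ → ℝ}, 0 < K →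
      IsSectorSolution ϑ α K f u → ∀ p ∈ closedSector ϑ, ∀ r, 0 < r →
        ∃ q, IsQuadraticApprox u q (closedBall p r ∩ closedSector ϑ) (f p) α (C * K) r := by
  obtain ⟨C, hC, h⟩ := exists_isQuadraticApprox_of_im_le h0 h1 hα0 hα1 hαϑ
  refine ⟨C, hC, fun {K f u} hK hu p hp r hr => ?_⟩
  rcases le_total p.im (bisectorRefl ϑ p).im with hle | hle
  · exact h hK hu p hp hle r hr
  · obtain ⟨q, ⟨e, hq, he⟩, hle⟩ := h hK hu.comp_bisectorRefl _
      (bisectorRefl_mem_closedSector.2 hp) (by rwa [bisectorRefl_bisectorRefl]) r hr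
    rw [bisectorRefl_bisectorRefl] at he
    refine ⟨_, ⟨e, hq.comp_bisectorRefl ϑ, he⟩, fun z hz => ?_⟩
    simpa only [bisectorRefl_bisectorRefl] using hle (bisectorRefl ϑ z)
      ⟨by rw [mem_closedBall, (bisectorRefl ϑ).dist_map]; exact hz.1,
        bisectorRefl_mem_closedSector.2 hz.2⟩

end IsSectorSolution

/-! ### Comparison of the approximating quadratics -/

lemma IsQuadratic.abs_secondDiff_sub_le {u q : ℂ → ℝ} {e t A : ℝ} {p v : ℂ}
    (hq : IsQuadratic q e) (ht : 0 < t) (h₁ : |u (p + t • v) - q (p + t • v)| ≤ A)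
    (h₂ : |u (p - t • v) - q (p - t • v)| ≤ A) (h₀ : |u p - q p| ≤ A) :
    |secondDiff q v - (u (p + t • v) + u (p - t • v) - 2 * u p) / t ^ 2| ≤ 4 * A / t ^ 2 := by
  rw [← mul_div_cancel_left₀ (secondDiff q v) (pow_pos ht 2).ne', ← hq.secondDiff_eq p v t,
    ← sub_div, abs_div, abs_of_pos (pow_pos ht 2)]
  gcongr
  rw [abs_le] at *
  constructor <;> linarith

lemma IsQuadratic.abs_secondDiff_le {q : ℂ → ℝ} {e s A : ℝ} {a v : ℂ} (hq : IsQuadratic q e)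
    (hs : 0 < s) (hA : ∀ z ∈ closedBall a s, |q z| ≤ A) (hv : ‖v‖ ≤ 2) :
    |secondDiff q v| ≤ 16 * A / s ^ 2 := by
  have hmem : ‖(s / 2) • v‖ ≤ s := by
    rw [norm_smul, Real.norm_of_nonneg (by positivity)]
    nlinarith
  have h := hq.abs_secondDiff_sub_le (u := 0) (p := a) (v := v) (half_pos hs)
    (by simpa using hA _ (by simpa using hmem)) (by simpa using hA _ (by simpa using hmem))
    (by simpa using hA a (mem_closedBall_self hs.le))
  simp only [Pi.zero_apply, add_zero, mul_zero, sub_zero, zero_div] at h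
  exact h.trans_eq (by ring)

lemma exists_closedBall_subset_inter_closedSector {ϑ : ℝ} (h0 : 0 < ϑ) (h1 : ϑ < π) :
    ∃ c > 0, ∀ p ∈ closedSector ϑ, ∀ r, 0 < r →
      ∃ a, closedBall a (c * r) ⊆ closedBall p r ∩ closedSector ϑ := by
  have hsin : 0 < Real.sin (ϑ / 2) := Real.sin_pos_of_pos_of_lt_pi (by linarith) (by linarith)
  have hsin1 := Real.sin_le_one (ϑ / 2)
  refine ⟨Real.sin (ϑ / 2) / 2, by positivity, fun p hp r hr => ?_⟩
  set b : ℂ := cexp ((ϑ / 2 : ℝ) * I)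
  have hb : b.im = Real.sin (ϑ / 2) := exp_ofReal_mul_I_im _
  have hrefl : bisectorRefl ϑ b = b := by
    rw [bisectorRefl_apply, ← exp_conj, ← Complex.exp_add]
    congr 1
    simp only [map_mul, conj_ofReal, conj_I]
    push_cast
    ring
  refine ⟨p + (r / 2) • b, subset_inter (closedBall_subset_closedBall' ?_)
    (closedBall_subset_closedSector ?_ ?_)⟩
  · rw [dist_self_add_left, norm_smul, norm_exp_ofReal_mul_I, Real.norm_of_nonneg (by positivity)]
    nlinarith
  · rw [map_add, map_smul, hrefl, add_im, smul_im, hb, smul_eq_mul]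
    linarith [hp.2]
  · rw [add_im, smul_im, hb, smul_eq_mul]
    linarith [hp.1]

namespace IsQuadraticApprox

variable {ϑ α : ℝ}

lemma exists_abs_secondDiff_sub_le (h0 : 0 < ϑ) (h1 : ϑ < π) (hα : 0 ≤ α) :
    ∃ C > 0, ∀ {u q q' : ℂ → ℝ} {p p' : ℂ} {r r' A c c' : ℝ}, p ∈ closedSector ϑ → 0 < r →
      r + ‖p - p'‖ ≤ r' → r' ≤ 2 * r →
      IsQuadraticApprox u q (closedBall p r ∩ closedSector ϑ) c α A r →
      IsQuadraticApprox u q' (closedBall p' r' ∩ closedSector ϑ) c' α A r' →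
      ∀ v, ‖v‖ ≤ 2 → |secondDiff q v - secondDiff q' v| ≤ C * A * r ^ α := by
  obtain ⟨s, hs, hball⟩ := exists_closedBall_subset_inter_closedSector h0 h1
  refine ⟨16 * (1 + 2 ^ (2 + α)) / s ^ 2, by positivity,
    fun {u q q' p p' r r' A c c'} hp hr hpr hr' h h' v hv => ?_⟩
  have hA := h.nonneg hr
  have hr'₀ : 0 ≤ r' := by linarith [norm_nonneg (p - p')]
  obtain ⟨a, ha⟩ := hball p hp r hr
  obtain ⟨e, hq, -⟩ := h.exists_isQuadratic
  obtain ⟨e', hq', -⟩ := h'.exists_isQuadratic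
  have hqq : ∀ z ∈ closedBall a (s * r), |q z - q' z| ≤ (1 + 2 ^ (2 + α)) * A * r ^ (2 + α) := by
    intro z hz
    obtain ⟨hzp, hzS⟩ := ha hz
    have hzp' : z ∈ closedBall p' r' :=
      closedBall_subset_closedBall' (by rwa [dist_eq_norm]) hzp
    calc |q z - q' z| ≤ |q z - u z| + |u z - q' z| := _root_.abs_sub_le _ _ _
      _ ≤ A * r ^ (2 + α) + A * r' ^ (2 + α) := by
        rw [abs_sub_comm]
        exact add_le_add (h.abs_sub_le z ⟨hzp, hzS⟩) (h'.abs_sub_le z ⟨hzp', hzS⟩)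
      _ ≤ A * r ^ (2 + α) + A * (2 * r) ^ (2 + α) := by gcongr
      _ = _ := by rw [Real.mul_rpow two_pos.le hr.le]; ring
  rw [← secondDiff_sub]
  refine ((hq.sub hq').abs_secondDiff_le (mul_pos hs hr) hqq hv).trans_eq ?_
  rw [Real.rpow_add hr, Real.rpow_two]
  field_simp

lemma tendsto_secondDiff {u : ℂ → ℝ} {q : ℕ → ℂ → ℝ} {ρ : ℕ → ℝ} {D : Set ℂ} {p v : ℂ}
    {A c ℓ : ℝ} (hα : 0 < α) (hD : D ∈ 𝓝 p) (hρ₀ : ∀ k, 0 < ρ k) (hρ : Tendsto ρ atTop (𝓝 0))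
    (hq : ∀ k, IsQuadraticApprox u (q k) (closedBall p (ρ k) ∩ D) c α A (ρ k)) (hv : ‖v‖ ≤ 2)
    (h : HasSecondSymmDerivAt u ℓ p v) : Tendsto (fun k => secondDiff (q k) v) atTop (𝓝 ℓ) := by
  have ht : Tendsto (fun k => ρ k / 2) atTop (𝓝[>] 0) :=
    tendsto_nhdsWithin_iff.2 ⟨by simpa using hρ.div_const 2, .of_forall fun k => half_pos (hρ₀ k)⟩
  have hbound : Tendsto (fun k => 16 * (A * ρ k ^ α)) atTop (𝓝 0) := by
    simpa [Real.zero_rpow hα.ne'] using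
      ((hρ.rpow_const (p := α) (.inr hα.le)).const_mul A).const_mul 16
  have hmem : ∀ w : ℂ, ∀ᶠ k in atTop, p + (ρ k / 2) • w ∈ D := fun w => by
    have hlim : Tendsto (fun k => p + (ρ k / 2) • w) atTop (𝓝 p) := by
      simpa using (tendsto_nhds_of_tendsto_nhdsWithin ht).smul_const w |>.const_add p
    exact hlim.eventually_mem hD
  have hdiff := squeeze_zero_norm' (f := fun k => secondDiff (q k) v -
    (u (p + (ρ k / 2) • v) + u (p - (ρ k / 2) • v) - 2 * u p) / (ρ k / 2) ^ 2) ?_ hbound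
  · simpa using hdiff.add (h.comp ht)
  · filter_upwards [hmem v, hmem (-v)] with k hk₁ hk₂
    rw [smul_neg, ← sub_eq_add_neg] at hk₂
    obtain ⟨⟨e, hqk, -⟩, hle⟩ := hq k
    have hv' : ‖(ρ k / 2) • v‖ ≤ ρ k := by
      rw [norm_smul, Real.norm_of_nonneg (half_pos (hρ₀ k)).le]
      nlinarith [hρ₀ k]
    refine (hqk.abs_secondDiff_sub_le (half_pos (hρ₀ k)) (hle _ ⟨by simpa using hv', hk₁⟩)
      (hle _ ⟨by simpa using hv', hk₂⟩)
      (hle p ⟨mem_closedBall_self (hρ₀ k).le, mem_of_mem_nhds hD⟩)).trans_eq ?_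
    have := (hρ₀ k).ne'
    rw [Real.rpow_add (hρ₀ k), Real.rpow_two]
    field_simp
    ring

end IsQuadraticApprox

namespace IsSectorSolution

variable {ϑ α : ℝ}

/-- Along a sequence of radii shrinking to zero geometrically, the Hessians of the approximating
quadratics form a Cauchy sequence with geometric rate. -/
lemma exists_abs_secondDiff_sub_le (h0 : 0 < ϑ) (h1 : ϑ < π / 2) (hα0 : 0 < α) (hα1 : α < 1)
    (hαϑ : (2 + α) * ϑ < π) : ∃ C > 0, ∀ {K : ℝ} {f u : ℂ → ℝ}, 0 < K →
      IsSectorSolution ϑ α K f u → ∀ p ∈ openSector ϑ, ∀ r, 0 < r →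
        ∃ q, IsQuadraticApprox u q (closedBall p r ∩ closedSector ϑ) (f p) α (C * K) r ∧
          ∀ v ℓ, ‖v‖ ≤ 2 → HasSecondSymmDerivAt u ℓ p v →
            |secondDiff q v - ℓ| ≤ C * K * r ^ α := by
  obtain ⟨A, hA, happrox⟩ := exists_isQuadraticApprox h0 h1 hα0.le hα1 hαϑ
  obtain ⟨B, hB, hcomp⟩ := IsQuadraticApprox.exists_abs_secondDiff_sub_le h0 (by linarith) hα0.le
  set τ : ℝ := (1 / 2) ^ α
  have hτ : 0 < 1 - τ := sub_pos.2 (Real.rpow_lt_one (by norm_num) (by norm_num) hα0)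
  refine ⟨A + B * A * τ / (1 - τ), by positivity, fun {K f u} hK hu p hp r hr => ?_⟩
  set ρ : ℕ → ℝ := fun k => r * (1 / 2) ^ k
  have hρ₀ : ∀ k, 0 < ρ k := fun k => by positivity
  have hρ : Tendsto ρ atTop (𝓝 0) := by
    simpa only [mul_zero] using (tendsto_pow_atTop_nhds_zero_of_lt_one
      (by norm_num : (0 : ℝ) ≤ 1 / 2) (by norm_num)).const_mul r
  have hρα : ∀ k, ρ k ^ α = r ^ α * τ ^ k := fun k => by
    rw [Real.mul_rpow hr.le (by positivity), Real.rpow_pow_comm (by norm_num)]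
  have hρ_succ : ∀ k, ρ k = 2 * ρ (k + 1) := fun k => by simp only [ρ, pow_succ]; ring
  have hpS := openSector_subset_closedSector ϑ hp
  choose q hq using fun k => happrox hK hu p hpS (ρ k) (hρ₀ k)
  have hρ_zero : ρ 0 = r := by simp [ρ]
  refine ⟨q 0, ?_, fun v ℓ hv hℓ => ?_⟩
  · rw [← hρ_zero]
    exact (hq 0).mono (hρ₀ 0).le (by gcongr; exact le_add_of_nonneg_right (by positivity))
  have hnhds : closedSector ϑ ∈ 𝓝 p :=
    mem_of_superset ((isOpen_openSector ϑ).mem_nhds hp) (openSector_subset_closedSector ϑ)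
  have hlim := IsQuadraticApprox.tendsto_secondDiff hα0 hnhds hρ₀ hρ hq hv hℓ
  have hcauchy : ∀ k, dist (secondDiff (q k) v) (secondDiff (q (k + 1)) v) ≤
      B * (A * K) * r ^ α * τ * τ ^ k := fun k => by
    rw [dist_comm, Real.dist_eq]
    refine (hcomp hpS (hρ₀ (k + 1)) ?_ (hρ_succ k).le (hq (k + 1)) (hq k) v hv).trans_eq ?_
    · rw [sub_self, norm_zero, hρ_succ k]
      linarith [hρ₀ (k + 1)]
    · rw [hρα, pow_succ]
      ring
  refine (dist_le_of_le_geometric_of_tendsto₀ τ _ (by linarith) hcauchy hlim).trans ?_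
  have : 0 ≤ A * K * r ^ α := by positivity
  calc B * (A * K) * r ^ α * τ / (1 - τ) = B * A * τ / (1 - τ) * K * r ^ α := by ring
    _ ≤ _ := by linarith

theorem exists_abs_secondSymmDeriv_sub_le (h0 : 0 < ϑ) (h1 : ϑ < π / 2) (hα0 : 0 < α)
    (hα1 : α < 1) (hαϑ : (2 + α) * ϑ < π) : ∃ C > 0, ∀ {K : ℝ} {f u : ℂ → ℝ}, 0 < K →
      IsSectorSolution ϑ α K f u → ∀ p ∈ openSector ϑ, ∀ p' ∈ openSector ϑ, p ≠ p' →
        ∀ v ℓ ℓ', ‖v‖ ≤ 2 → HasSecondSymmDerivAt u ℓ p v → HasSecondSymmDerivAt u ℓ' p' v →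
          |ℓ - ℓ'| ≤ C * K * ‖p - p'‖ ^ α := by
  obtain ⟨A, hA, happrox⟩ := exists_abs_secondDiff_sub_le h0 h1 hα0 hα1 hαϑ
  obtain ⟨B, hB, hcomp⟩ := IsQuadraticApprox.exists_abs_secondDiff_sub_le h0 (by linarith) hα0.le
  refine ⟨A + B * A + A * 2 ^ α, by positivity,
    fun {K f u} hK hu p hp p' hp' hne v ℓ ℓ' hv hℓ hℓ' => ?_⟩
  have hr : 0 < ‖p - p'‖ := norm_pos_iff.2 (sub_ne_zero.2 hne)
  set r := ‖p - p'‖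
  obtain ⟨q, hq, hqℓ⟩ := happrox hK hu p hp r hr
  obtain ⟨q', hq', hqℓ'⟩ := happrox hK hu p' hp' (2 * r) (by positivity)
  have hqq := hcomp (openSector_subset_closedSector ϑ hp) hr (two_mul r).ge le_rfl hq hq' v hv
  calc |ℓ - ℓ'| ≤ |ℓ - secondDiff q v| + |secondDiff q v - secondDiff q' v| +
        |secondDiff q' v - ℓ'| := by
          linarith [abs_sub_le ℓ (secondDiff q v) ℓ',
            abs_sub_le (secondDiff q v) (secondDiff q' v) ℓ']
    _ ≤ A * K * r ^ α + B * (A * K) * r ^ α + A * K * (2 * r) ^ α := by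
      rw [abs_sub_comm ℓ]
      exact add_le_add_three (hqℓ v ℓ hv hℓ) hqq (hqℓ' v ℓ' hv hℓ')
    _ = _ := by rw [Real.mul_rpow two_pos.le hr.le]; ring

end IsSectorSolution

/-! ### The logarithmic bound -/

lemma one_half_lt_log_two_add {x : ℝ} (hx : 0 ≤ x) : 1 / 2 < Real.log (2 + x) := by
  have hlog : Real.log 2 ≤ Real.log (2 + x) := Real.log_le_log two_pos (by linarith)
  linarith [Real.log_two_gt_d9]

lemma exists_nat_le_two_pow {x : ℝ} (hx : 0 ≤ x) :
    ∃ N : ℕ, x ≤ 2 ^ N ∧ (N + 1 : ℝ) ≤ 6 * Real.log (2 + x) := by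
  have hlogb : Real.logb 2 (2 + x) ≤ 2 * Real.log (2 + x) := by
    rw [Real.logb, div_le_iff₀ (Real.log_pos one_lt_two)]
    nlinarith [one_half_lt_log_two_add hx, Real.log_two_gt_d9]
  refine ⟨⌈Real.logb 2 (2 + x)⌉₊, ?_, ?_⟩
  · have hceil := Nat.le_ceil (Real.logb 2 (2 + x))
    rw [Real.logb_le_iff_le_rpow one_lt_two (by linarith), Real.rpow_natCast] at hceil
    linarith
  · have hceil := Nat.ceil_lt_add_one (Real.logb_nonneg one_lt_two (by linarith : 1 ≤ 2 + x))
    linarith [one_half_lt_log_two_add hx]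

lemma abs_secondDiff_cornerQuad_le {ϑ : ℝ} (hϑ : 0 < Real.cos ϑ) (a : ℝ) {v : ℂ} (hv : ‖v‖ ≤ 2) :
    |secondDiff (cornerQuad ϑ a) v| ≤ 4 / Real.cos ϑ * |a| := by
  have hcorner : secondDiff (cornerQuad ϑ a) v = 2 * cornerQuad ϑ a v := by
    simp only [secondDiff, cornerQuad, map_neg, map_zero, neg_im, zero_im]
    ring
  rw [hcorner, abs_mul, abs_two]
  calc 2 * |cornerQuad ϑ a v| ≤ 2 * (|a| / (2 * Real.cos ϑ) * 2 ^ 2) := by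
        gcongr
        exact (abs_cornerQuad_le hϑ a v).trans (by gcongr)
    _ = 4 / Real.cos ϑ * |a| := by ring

lemma IsQuadraticApprox.exists_abs_secondDiff_sub_le_natCast {ϑ : ℝ} (h0 : 0 < ϑ) (h1 : ϑ < π) :
    ∃ C > 0, ∀ {u : ℂ → ℝ} {q : ℕ → ℂ → ℝ} {p : ℂ} {A c : ℝ}, p ∈ closedSector ϑ →
      (∀ k, IsQuadraticApprox u (q k) (closedBall p (2 ^ k) ∩ closedSector ϑ) c 0 A (2 ^ k)) →
      ∀ k v, ‖v‖ ≤ 2 → |secondDiff (q 0) v - secondDiff (q k) v| ≤ C * A * k := by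
  obtain ⟨C, hC, hcomp⟩ := exists_abs_secondDiff_sub_le h0 h1 le_rfl
  refine ⟨C, hC, fun {u q p A c} hp hq k v hv => ?_⟩
  have hstep : ∀ j, dist (secondDiff (q j) v) (secondDiff (q (j + 1)) v) ≤ C * A := fun j => by
    rw [Real.dist_eq]
    refine (hcomp hp (by positivity) ?_ (pow_succ' 2 j).le (hq j) (hq (j + 1)) v hv).trans_eq
      (by rw [Real.rpow_zero, mul_one])
    rw [sub_self, norm_zero, add_zero]
    gcongr <;> simp
  simpa [Real.dist_eq, mul_comm] using dist_le_range_sum_of_dist_le k fun {j} _ => hstep j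

namespace IsSectorSolution

variable {ϑ α : ℝ}

lemma of_holder {α' K K' : ℝ} {f u : ℂ → ℝ} (hu : IsSectorSolution ϑ α K f u)
    (hf : ∀ z ∈ closedSector ϑ, ∀ w ∈ closedSector ϑ, |f z - f w| ≤ K' * ‖z - w‖ ^ α') :
    IsSectorSolution ϑ α' K' f u :=
  { hu with holder := hf }

lemma of_abs_le {K F : ℝ} {f u : ℂ → ℝ} (hu : IsSectorSolution ϑ α K f u)
    (hf : ∀ z ∈ closedSector ϑ, |f z| ≤ F) : IsSectorSolution ϑ 0 (2 * F) f u :=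
  hu.of_holder fun z hz w hw => by
    rw [Real.rpow_zero]
    linarith [abs_sub (f z) (f w), hf z hz, hf w hw]

/-- Each of the dyadic scales between `1` and the distance to the vertex contributes a bounded
amount, since a bounded right-hand side satisfies the Hölder condition with exponent zero. -/
lemma exists_abs_secondDiff_le_log (h0 : 0 < ϑ) (h1 : ϑ < π / 2) : ∃ C > 0,
    ∀ {F : ℝ} {f u : ℂ → ℝ}, 0 < F → IsSectorSolution ϑ 0 F f u → |f 0| ≤ F →
      ∀ p ∈ closedSector ϑ, ∃ q,
        IsQuadraticApprox u q (closedBall p 1 ∩ closedSector ϑ) (f p) 0 (C * F) 1 ∧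
          ∀ v, ‖v‖ ≤ 2 → |secondDiff q v| ≤ C * F * Real.log (2 + ‖p‖) := by
  have hcos : 0 < Real.cos ϑ := Real.cos_pos_of_mem_Ioo ⟨by linarith, h1⟩
  have hcrit : (2 + 0) * ϑ < π := by linarith
  obtain ⟨A₁, hA₁, happrox⟩ := exists_isQuadraticApprox h0 h1 le_rfl one_pos hcrit
  obtain ⟨A₂, hA₂, hcorner⟩ := exists_isQuadraticApprox_cornerQuad h0 h1 le_rfl hcrit le_rfl
  obtain ⟨B, hB, hchain⟩ := IsQuadraticApprox.exists_abs_secondDiff_sub_le_natCast h0 (by linarith)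
  set A := max A₁ A₂
  have hA : 0 < A := lt_max_of_lt_left hA₁
  refine ⟨A + 6 * (B * A + 4 / Real.cos ϑ), by positivity, fun {F f u} hF hu hf p hp => ?_⟩
  obtain ⟨N, hpN, hN⟩ := exists_nat_le_two_pow (norm_nonneg p)
  choose q hq using fun k : ℕ => happrox hF hu p hp (2 ^ k) (by positivity)
  set Q := Function.update q N (cornerQuad ϑ (f 0))
  have hQ : ∀ k, IsQuadraticApprox u (Q k) (closedBall p (2 ^ k) ∩ closedSector ϑ) (f p) 0
      (A * F) (2 ^ k) :=
    (Function.forall_update_iff q fun k g => IsQuadraticApprox u g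
      (closedBall p (2 ^ k) ∩ closedSector ϑ) (f p) 0 (A * F) (2 ^ k)).2
      ⟨(hcorner hF hu p hp (2 ^ N) (by positivity) (by rwa [one_mul])).mono (by positivity)
        (by gcongr; exact le_max_right _ _),
      fun k _ => (hq k).mono (by positivity) (by gcongr; exact le_max_left _ _)⟩
  have hlog := one_half_lt_log_two_add (norm_nonneg p)
  refine ⟨Q 0, ?_, fun v hv => ?_⟩
  · simpa using (hQ 0).mono (by positivity) (mul_le_mul_of_nonneg_right
      (le_add_of_nonneg_right (by positivity)) hF.le)
  have hdiff := hchain hp hQ N v hv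
  rw [show Q N = _ from Function.update_self N _ q] at hdiff
  have hcornerF := (abs_secondDiff_cornerQuad_le hcos (f 0) hv).trans
    (mul_le_mul_of_nonneg_left hf (by positivity))
  calc |secondDiff (Q 0) v|
      ≤ |secondDiff (Q 0) v - secondDiff (cornerQuad ϑ (f 0)) v| +
          |secondDiff (cornerQuad ϑ (f 0)) v| := by
        simpa using abs_add_le (secondDiff (Q 0) v - secondDiff (cornerQuad ϑ (f 0)) v)
          (secondDiff (cornerQuad ϑ (f 0)) v)
    _ ≤ B * (A * F) * N + 4 / Real.cos ϑ * F := add_le_add hdiff hcornerF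
    _ ≤ (B * A + 4 / Real.cos ϑ) * F * (N + 1) := by
        have : 0 ≤ B * A * F := by positivity
        have : 0 ≤ 4 / Real.cos ϑ * F * N := by positivity
        linarith
    _ ≤ (B * A + 4 / Real.cos ϑ) * F * (6 * Real.log (2 + ‖p‖)) := by gcongr
    _ ≤ _ := by
        have : 0 ≤ A * F * Real.log (2 + ‖p‖) := by positivity
        linarith

theorem exists_abs_secondSymmDeriv_le (h0 : 0 < ϑ) (h1 : ϑ < π / 2) (hα0 : 0 < α) (hα1 : α < 1)
    (hαϑ : (2 + α) * ϑ < π) : ∃ C > 0, ∀ {K F : ℝ} {f u : ℂ → ℝ}, 0 < K → 0 < F →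
      IsSectorSolution ϑ α K f u → (∀ z ∈ closedSector ϑ, |f z| ≤ F) →
        ∀ p ∈ openSector ϑ, ∀ v ℓ, ‖v‖ ≤ 2 → HasSecondSymmDerivAt u ℓ p v →
          |ℓ| ≤ C * (K + F * Real.log (2 + ‖p‖)) := by
  obtain ⟨A, hA, hholder⟩ := exists_abs_secondDiff_sub_le h0 h1 hα0 hα1 hαϑ
  obtain ⟨A', hA', hlog⟩ := exists_abs_secondDiff_le_log h0 h1
  obtain ⟨B, hB, hcomp⟩ := IsQuadraticApprox.exists_abs_secondDiff_sub_le h0 (by linarith) le_rfl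
  refine ⟨A + B * A + 4 * B * A' + 2 * A', by positivity,
    fun {K F f u} hK hF hu hf p hp v ℓ hv hℓ => ?_⟩
  have hpS := openSector_subset_closedSector ϑ hp
  obtain ⟨q, hq, hqℓ⟩ := hholder hK hu p hp 1 one_pos
  obtain ⟨q', hq', hq'v⟩ := hlog (mul_pos two_pos hF) (hu.of_abs_le hf)
    ((hf 0 (zero_mem_closedSector ϑ)).trans (by linarith)) p hpS
  have hq₁ := hqℓ v ℓ hv hℓ
  have hq₂ := hq'v v hv
  have hq₀ : IsQuadraticApprox u q (closedBall p 1 ∩ closedSector ϑ) (f p) 0 (A * K) 1 :=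
    ⟨by simpa using hq.exists_isQuadratic, by simpa using hq.abs_sub_le⟩
  have hqq := hcomp hpS one_pos (by simp) (by norm_num)
    (hq₀.mono zero_le_one (le_add_of_nonneg_right (by positivity)))
    (hq'.mono zero_le_one (le_add_of_nonneg_left (by positivity))) v hv
  rw [Real.one_rpow, mul_one] at hq₁ hqq
  have hL := one_half_lt_log_two_add (norm_nonneg p)
  set L := Real.log (2 + ‖p‖)
  have hFL : F ≤ 2 * (F * L) := by nlinarith
  have hℓ_le : |ℓ| ≤ A * K + B * (A * K + A' * (2 * F)) + A' * (2 * F) * L := by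
    rw [abs_le] at *
    constructor <;> linarith
  have hBA' : 0 < B * A' := by positivity
  have hcross : 0 ≤ (4 * B * A' + 2 * A') * K + (A + B * A) * (F * L) := by positivity
  nlinarith

end IsSectorSolution

/-! ### Hessians -/

lemma abs_apply_le_of_abs_apply_self_le {E : Type*} [NormedAddCommGroup E] [NormedSpace ℝ E]
    {B : E →L[ℝ] E →L[ℝ] ℝ} (hB : ∀ v w, B v w = B w v) {M : ℝ}
    (hM : ∀ v, ‖v‖ ≤ 2 → |B v v| ≤ M) {v w : E} (hv : ‖v‖ ≤ 1) (hw : ‖w‖ ≤ 1) :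
    |B v w| ≤ M / 2 := by
  have hadd := abs_le.1 (hM (v + w) ((norm_add_le v w).trans (by linarith)))
  have hsub := abs_le.1 (hM (v - w) ((norm_sub_le v w).trans (by linarith)))
  have hpolar : 4 * B v w = B (v + w) (v + w) - B (v - w) (v - w) := by
    simp only [map_add, map_sub, add_apply, sub_apply, hB w v]
    ring
  rw [abs_le]
  constructor <;> linarith

section Hessian

variable {u : ℂ → ℝ} {z : ℂ}

lemma hess_eq (hu : ContDiffAt ℝ 2 u z) (v₁ v₂ : ℂ) :
    hess u v₁ v₂ z = fderiv ℝ (fderiv ℝ u) z v₂ v₁ := by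
  have hd : DifferentiableAt ℝ (fderiv ℝ u) z :=
    (hu.fderiv_right (m := 1) (by norm_num)).differentiableAt (by simp)
  simp [hess, fderiv_clm_apply hd (differentiableAt_const v₁)]

lemma lap_eq_laplacian (hu : ContDiffAt ℝ 2 u z) : lap u z = Δ u z := by
  change hess u 1 1 z + hess u I I z = Δ u z
  simp [hess_eq hu, laplacian_eq_iteratedFDeriv_complexPlane, iteratedFDeriv_two_apply]

end Hessian

namespace IsSectorSolution

variable {ϑ α K : ℝ} {f u : ℂ → ℝ}

lemma nonneg (h0 : 0 < ϑ) (h1 : ϑ < π) (hu : IsSectorSolution ϑ α K f u) : 0 ≤ K := by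
  have hone : (1 : ℂ) ∈ closedSector ϑ :=
    ⟨by simp, by simpa [bisectorRefl_im] using (Real.sin_pos_of_pos_of_lt_pi h0 h1).le⟩
  have h := hu.holder 1 hone 0 (zero_mem_closedSector ϑ)
  rw [sub_zero (1 : ℂ), norm_one, Real.one_rpow, mul_one] at h
  exact (abs_nonneg _).trans h

lemma mono {K' : ℝ} (hu : IsSectorSolution ϑ α K f u) (hK : K ≤ K') :
    IsSectorSolution ϑ α K' f u :=
  hu.of_holder fun z hz w hw => (hu.holder z hz w hw).trans (by gcongr)

lemma of_exponent_le {α' F : ℝ} (hu : IsSectorSolution ϑ α K f u)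
    (hf : ∀ z ∈ closedSector ϑ, |f z| ≤ F) (hα' : 0 ≤ α') (hα : α' ≤ α) (hK : 0 ≤ K) :
    IsSectorSolution ϑ α' (K + 2 * F) f u := by
  have hF : 0 ≤ F := (abs_nonneg _).trans (hf 0 (zero_mem_closedSector ϑ))
  refine hu.of_holder fun z hz w hw => ?_
  rcases le_total ‖z - w‖ 1 with h | h
  · rcases (norm_nonneg (z - w)).eq_or_lt with h₀ | h₀
    · rw [eq_of_sub_eq_zero (norm_eq_zero.1 h₀.symm), sub_self, abs_zero]
      positivity
    calc |f z - f w| ≤ K * ‖z - w‖ ^ α := hu.holder z hz w hw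
      _ ≤ (K + 2 * F) * ‖z - w‖ ^ α' :=
        mul_le_mul (by linarith) (Real.rpow_le_rpow_of_exponent_ge h₀ h hα) (by positivity)
          (by positivity)
  · calc |f z - f w| ≤ |f z| + |f w| := abs_sub _ _
      _ ≤ K + 2 * F := by linarith [hf z hz, hf w hw]
      _ ≤ (K + 2 * F) * ‖z - w‖ ^ α' :=
        le_mul_of_one_le_right (by positivity) (Real.one_le_rpow h hα')

theorem exists_abs_hess_sub_le (h0 : 0 < ϑ) (h1 : ϑ < π / 2) (hα0 : 0 < α) (hα1 : α < 1)
    (hαϑ : (2 + α) * ϑ < π) : ∃ C > 0, ∀ {K : ℝ} {f u : ℂ → ℝ},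
      IsSectorSolution ϑ α K f u → ContDiffOn ℝ 2 u (openSector ϑ) →
        ∀ v₁ v₂, ‖v₁‖ ≤ 1 → ‖v₂‖ ≤ 1 → ∀ p ∈ openSector ϑ, ∀ p' ∈ openSector ϑ, p ≠ p' →
          |hess u v₁ v₂ p - hess u v₁ v₂ p'| ≤ C * K * ‖p - p'‖ ^ α := by
  obtain ⟨C, hC, hdiff⟩ := exists_abs_secondSymmDeriv_sub_le h0 h1 hα0 hα1 hαϑ
  refine ⟨C / 2, by positivity, fun {K f u} hu hu₂ v₁ v₂ hv₁ hv₂ p hp p' hp' hne => ?_⟩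
  have hd : ∀ y ∈ openSector ϑ, ContDiffAt ℝ 2 u y :=
    fun y hy => hu₂.contDiffAt ((isOpen_openSector ϑ).mem_nhds hy)
  set B := fderiv ℝ (fderiv ℝ u) p - fderiv ℝ (fderiv ℝ u) p'
  have hB : ∀ v w, B v w = B w v := fun v w =>
    congrArg₂ (· - ·) (((hd p hp).isSymmSndFDerivAt (by simp)).eq v w)
      (((hd p' hp').isSymmSndFDerivAt (by simp)).eq v w)
  have hlim : Tendsto (fun y => C * y * ‖p - p'‖ ^ α / 2) (𝓝[>] K)
      (𝓝 (C * K * ‖p - p'‖ ^ α / 2)) :=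
    tendsto_nhdsWithin_of_tendsto_nhds (Continuous.tendsto (by fun_prop) K)
  rw [hess_eq (hd p hp), hess_eq (hd p' hp')]
  refine (ge_of_tendsto hlim ?_).trans_eq (by ring)
  filter_upwards [self_mem_nhdsWithin] with y hy
  exact abs_apply_le_of_abs_apply_self_le hB (fun v hv =>
    hdiff ((hu.nonneg h0 (by linarith)).trans_lt hy) (hu.mono (le_of_lt hy)) p hp p' hp' hne v _ _
      hv (hasSecondSymmDerivAt_of_contDiffAt (hd p hp) v)
      (hasSecondSymmDerivAt_of_contDiffAt (hd p' hp') v)) hv₂ hv₁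

/-- A bounded Hölder function is Hölder for all smaller exponents, in particular for one below the
critical exponent of the sector. -/
theorem exists_abs_hess_le (h0 : 0 < ϑ) (h1 : ϑ < π / 2) (hα : 0 < α) :
    ∃ C > 0, ∀ {K F : ℝ} {f u : ℂ → ℝ},
      IsSectorSolution ϑ α K f u → (∀ z ∈ closedSector ϑ, |f z| ≤ F) →
        ContDiffOn ℝ 2 u (openSector ϑ) → ∀ v₁ v₂, ‖v₁‖ ≤ 1 → ‖v₂‖ ≤ 1 →
          ∀ p ∈ openSector ϑ, |hess u v₁ v₂ p| ≤ C * (K + F * Real.log (2 + ‖p‖)) := by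
  have hcrit : 0 < π / ϑ - 2 := by
    rw [sub_pos, lt_div_iff₀ h0]
    linarith
  obtain ⟨α', hα'0, hα'⟩ := exists_between (lt_min (lt_min hα one_pos) hcrit)
  obtain ⟨⟨hα'α, hα'1⟩, hα'ϑ⟩ := (lt_min_iff.1 hα').imp_left lt_min_iff.1
  obtain ⟨C, hC, hbound⟩ := exists_abs_secondSymmDeriv_le h0 h1 hα'0 hα'1
    ((lt_div_iff₀ h0).1 (by linarith))
  refine ⟨5 * C / 2, by positivity, fun {K F f u} hu hf hu₂ v₁ v₂ hv₁ hv₂ p hp => ?_⟩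
  have hd : ContDiffAt ℝ 2 u p := hu₂.contDiffAt ((isOpen_openSector ϑ).mem_nhds hp)
  have hK := hu.nonneg h0 (by linarith)
  have hF : 0 ≤ F := (abs_nonneg _).trans (hf 0 (zero_mem_closedSector ϑ))
  have hu' := hu.of_exponent_le hf hα'0.le hα'α.le hK
  have hL := one_half_lt_log_two_add (norm_nonneg p)
  set L := Real.log (2 + ‖p‖)
  have hlim : Tendsto (fun y => C * (K + 2 * F + y + (F + y) * L) / 2) (𝓝[>] 0)
      (𝓝 (C * (K + 2 * F + F * L) / 2)) :=
    tendsto_nhdsWithin_of_tendsto_nhds (Continuous.tendsto' (by fun_prop) _ _ (by simp))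
  calc |hess u v₁ v₂ p| ≤ C * (K + 2 * F + F * L) / 2 := by
        rw [hess_eq hd]
        refine ge_of_tendsto hlim ?_
        filter_upwards [self_mem_nhdsWithin] with y (hy : 0 < y)
        exact abs_apply_le_of_abs_apply_self_le (fun v w => (hd.isSymmSndFDerivAt (by simp)).eq v w)
          (fun v hv => hbound (by positivity) (by positivity) (hu'.mono (by linarith))
            (fun z hz => (hf z hz).trans (by linarith)) p hp v _ hv
            (hasSecondSymmDerivAt_of_contDiffAt hd v)) hv₂ hv₁
    _ ≤ C * (5 * (K + F * L)) / 2 := by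
        gcongr
        nlinarith
    _ = _ := by ring

end IsSectorSolution

/-! ### Hölder norms -/

section HolderNorm

variable {α : ℝ} {D : Set ℂ} {f : ℂ → ℝ}

lemma supNormC_mono {D' : Set ℂ} (h : D ⊆ D') (f : ℂ → ℝ) : supNormC D f ≤ supNormC D' f :=
  iSup_le fun z => le_iSup (fun z : D' => (‖f z‖₊ : ℝ≥0∞)) ⟨z, h z.2⟩

lemma abs_le_toReal_supNormC (h : supNormC D f ≠ ⊤) {z : ℂ} (hz : z ∈ D) :
    |f z| ≤ (supNormC D f).toReal := by
  simpa using ENNReal.toReal_mono h (le_iSup (fun z : D => (‖f z‖₊ : ℝ≥0∞)) ⟨z, hz⟩)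

lemma supNormC_ne_top (h : unifNormC α D f ≠ ⊤) : supNormC D f ≠ ⊤ :=
  ne_top_of_le_ne_top h le_self_add

lemma abs_sub_le_toReal_unifNormC (hα : 0 < α) (h : unifNormC α D f ≠ ⊤) {z w : ℂ} (hz : z ∈ D)
    (hw : w ∈ D) : |f z - f w| ≤ (unifNormC α D f).toReal * ‖z - w‖ ^ α := by
  rcases eq_or_ne z w with rfl | hzw
  · simp [Real.zero_rpow hα.ne']
  have hpos : 0 < ‖z - w‖ ^ α := Real.rpow_pos_of_pos (norm_pos_iff.2 (sub_ne_zero.2 hzw)) α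
  have hle : (‖f z - f w‖₊ : ℝ≥0∞) / ENNReal.ofReal (‖z - w‖ ^ α) ≤ unifNormC α D f :=
    (le_iSup (fun p : {q : D × D // (q.1 : ℂ) ≠ (q.2 : ℂ)} =>
      (‖f p.1.1 - f p.1.2‖₊ : ℝ≥0∞) / ENNReal.ofReal (‖(p.1.1 : ℂ) - p.1.2‖ ^ α))
      ⟨(⟨z, hz⟩, ⟨w, hw⟩), hzw⟩).trans le_add_self
  have := ENNReal.toReal_mono h hle
  rw [ENNReal.toReal_div, ENNReal.toReal_ofReal hpos.le, div_le_iff₀ hpos] at this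
  simpa using this

lemma holderSemiC_le_ofReal {M : ℝ}
    (h : ∀ z ∈ D, ∀ w ∈ D, z ≠ w → |f z - f w| ≤ M * ‖z - w‖ ^ α) :
    holderSemiC α D f ≤ ENNReal.ofReal M := by
  refine iSup_le fun ⟨⟨⟨z, hz⟩, ⟨w, hw⟩⟩, hzw⟩ => ENNReal.div_le_of_le_mul ?_
  rw [← ENNReal.ofReal_mul' (by positivity), ← enorm_eq_nnnorm, ← ofReal_norm]
  exact ENNReal.ofReal_le_ofReal (h z hz w hw hzw)

lemma continuousOn_of_unifNormC_ne_top (hα : 0 < α) (h : unifNormC α D f ≠ ⊤) :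
    ContinuousOn f D := by
  intro z hz
  have hlim : Tendsto (fun w => (unifNormC α D f).toReal * ‖w - z‖ ^ α) (𝓝[D] z) (𝓝 0) := by
    refine tendsto_nhdsWithin_of_tendsto_nhds (Continuous.tendsto' ?_ _ _ ?_)
    · exact continuous_const.mul ((continuous_norm.comp (continuous_sub_right z)).rpow_const
        fun _ => .inr hα.le)
    · simp [Real.zero_rpow hα.ne']
  refine tendsto_iff_dist_tendsto_zero.2 (squeeze_zero' (.of_forall fun _ => dist_nonneg) ?_ hlim)
  filter_upwards [self_mem_nhdsWithin] with w hw
  exact abs_sub_le_toReal_unifNormC hα h hw hz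

lemma abs_le_toReal_supNormC_of_mem_closure (hα : 0 < α) (h : unifNormC α (closure D) f ≠ ⊤)
    {z : ℂ} (hz : z ∈ closure D) : |f z| ≤ (supNormC D f).toReal :=
  ((continuousOn_of_unifNormC_ne_top hα h z hz).mono subset_closure).abs.closure_le hz
    continuousWithinAt_const fun _ hw => abs_le_toReal_supNormC
      (ne_top_of_le_ne_top (supNormC_ne_top h) (supNormC_mono subset_closure f)) hw

end HolderNorm

/-! ### The Dirichlet problem on the sector -/

lemma sector_eq_openSector {β : ℝ} (h0 : 0 < β) (h1 : β ≤ 1) :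
    Sector β = openSector (β * π) := by
  ext z
  rw [mem_openSector_iff (by positivity) (mul_le_of_le_one_left Real.pi_pos.le h1)]
  rfl

lemma openSector_nonempty {ϑ : ℝ} (h0 : 0 < ϑ) (h1 : ϑ < π) : (openSector ϑ).Nonempty := by
  have hsin := Real.sin_pos_of_pos_of_lt_pi h0 h1
  refine ⟨⟨(Real.cos ϑ + 1) / Real.sin ϑ, 1⟩, one_pos, ?_⟩
  rw [bisectorRefl_im, mul_div_cancel₀ _ hsin.ne']
  linarith

lemma closure_openSector {ϑ : ℝ} (h0 : 0 < ϑ) (h1 : ϑ < π) :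
    closure (openSector ϑ) = closedSector ϑ := by
  refine (closure_minimal (openSector_subset_closedSector ϑ)
    (isClosed_closedSector ϑ)).antisymm fun z hz => ?_
  obtain ⟨b, hb⟩ := openSector_nonempty h0 h1
  have hlim : Tendsto (fun t : ℝ => z + t • b) (𝓝[>] 0) (𝓝 z) :=
    tendsto_nhdsWithin_of_tendsto_nhds (Continuous.tendsto' (by fun_prop) _ _ (by simp))
  refine mem_closure_of_tendsto hlim ?_
  filter_upwards [self_mem_nhdsWithin] with t ht
  simp only [openSector, mem_ofPred_eq, map_add, map_smul, add_im, smul_im, smul_eq_mul]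
  exact ⟨add_pos_of_nonneg_of_pos hz.1 (mul_pos ht hb.1),
    add_pos_of_nonneg_of_pos hz.2 (mul_pos ht hb.2)⟩

lemma frontier_openSector {ϑ : ℝ} (h0 : 0 < ϑ) (h1 : ϑ < π) :
    frontier (openSector ϑ) = closedSector ϑ \ openSector ϑ := by
  rw [(isOpen_openSector ϑ).frontier_eq, closure_openSector h0 h1]

lemma abs_le_toReal_supNormC_openSector {ϑ α : ℝ} {f : ℂ → ℝ} (h0 : 0 < ϑ) (h1 : ϑ < π)
    (hα : 0 < α) (hf : unifNormC α (closedSector ϑ) f ≠ ⊤) {z : ℂ} (hz : z ∈ closedSector ϑ) :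
    |f z| ≤ (supNormC (openSector ϑ) f).toReal := by
  rw [← closure_openSector h0 h1] at hf hz
  exact abs_le_toReal_supNormC_of_mem_closure hα hf hz

lemma two_add_mul_lt_pi {α β : ℝ} (hβ : 0 < β) (hα : α < 1 / β - 2) : (2 + α) * (β * π) < π := by
  rw [← mul_assoc]
  exact mul_lt_of_lt_one_left Real.pi_pos ((lt_div_iff₀ hβ).1 (by linarith))

theorem isSectorSolution_of_unifNormC_ne_top {ϑ α : ℝ} {f Ψ : ℂ → ℝ} (hα : 0 < α)
    (hf : unifNormC α (closedSector ϑ) f ≠ ⊤) (hΨ : ContinuousOn Ψ (closedSector ϑ))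
    (hΨ₂ : ContDiffOn ℝ 2 Ψ (openSector ϑ)) (hlap : ∀ z ∈ openSector ϑ, lap Ψ z = f z)
    (hzero : ∀ z ∈ closedSector ϑ \ openSector ϑ, Ψ z = 0)
    (hgrowth : ∃ C₀ : ℝ, ∀ z ∈ openSector ϑ,
      |Ψ z| ≤ C₀ * ‖z‖ ^ 2 * Real.log (Real.exp 1 + ‖z‖)) :
    IsSectorSolution ϑ α (unifNormC α (closedSector ϑ) f).toReal f Ψ where
  continuousOn := hΨ
  laplacian z hz v hv := by
    have hd := hΨ₂.contDiffAt ((isOpen_openSector ϑ).mem_nhds hz)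
    rw [← hlap z hz, lap_eq_laplacian hd]
    exact hasFrameLaplacianAt_of_contDiffAt hd hv
  eq_zero := hzero
  holder z hz w hw := abs_sub_le_toReal_unifNormC hα hf hz hw
  growth m hm := by
    obtain ⟨C₀, hC₀⟩ := hgrowth
    refine IsBigO.trans_isLittleO (.of_bound |C₀| ?_)
      ((norm_sq_mul_log_isLittleO hm).mono inf_le_left)
    filter_upwards [mem_inf_of_right (mem_principal_self _)] with z hz
    by_cases hzo : z ∈ openSector ϑ
    · refine (hC₀ z hzo).trans ((le_abs_self _).trans_eq ?_)
      rw [mul_assoc, abs_mul, Real.norm_eq_abs]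
    · rw [hzero z ⟨hz, hzo⟩, norm_zero]
      positivity

end SectorSchauder

/-- **Uniform Hölder estimate for the Dirichlet Laplacian on a sector (Lemma 3.7).**
For `0 < β < 1/2`, `0 < α < 1`, there is `C = C(α,β) > 0` such that for every `f` with
`‖f‖_{C^α(Ω̄_β)} < ∞` and the unique `Ψ` with `ΔΨ = f` in `Ω_β`, `Ψ = 0` on `∂Ω_β` and
`|Ψ(x)| ≤ C₀ |x|² ln(e+|x|)`:
(i) `|∇²Ψ(x)| ≤ C ln(2+|x|) ‖f‖_{L^∞(Ω_β)} + C ‖f‖_{C^α(Ω̄_β)}` on `Ω_β`, and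
(ii) if moreover `α < 1/β - 2`, then `sup_{x≠y} |∇²Ψ(x) - ∇²Ψ(y)|/|x-y|^α ≤ C ‖f‖_{C^α(Ω̄_β)}`. -/
theorem sector_uniform_holder_estimate (β α : ℝ) (hβ0 : 0 < β) (hβ : β < 1/2)
    (hα0 : 0 < α) (hα1 : α < 1) :
    ∃ C : ℝ, 0 < C ∧
      ∀ (f Ψ : ℂ → ℝ),
      unifNormC α (closure (Sector β)) f < ⊤ →
      ContinuousOn Ψ (closure (Sector β)) →
      ContDiffOn ℝ 2 Ψ (Sector β) →
      (∀ z ∈ Sector β, lap Ψ z = f z) →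
      (∀ z ∈ frontier (Sector β), Ψ z = 0) →
      (∃ C₀ : ℝ, ∀ z ∈ Sector β, |Ψ z| ≤ C₀ * ‖z‖ ^ 2 * Real.log (Real.exp 1 + ‖z‖)) →
      ∀ v₁ ∈ ({1, Complex.I} : Set ℂ), ∀ v₂ ∈ ({1, Complex.I} : Set ℂ),
        (∀ z ∈ Sector β,
          |hess Ψ v₁ v₂ z| ≤
            C * Real.log (2 + ‖z‖) * (supNormC (Sector β) f).toReal +
              C * (unifNormC α (closure (Sector β)) f).toReal) ∧
        (α < 1/β - 2 →
          holderSemiC α (Sector β) (hess Ψ v₁ v₂) ≤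
            ENNReal.ofReal C * unifNormC α (closure (Sector β)) f) := by
  open SectorSchauder in
  have h0 : 0 < β * π := by positivity
  have h1 : β * π < π / 2 := by nlinarith [Real.pi_pos]
  have h1' : β * π < π := by linarith
  obtain ⟨C₁, hC₁, hlog⟩ := IsSectorSolution.exists_abs_hess_le h0 h1 hα0
  choose! C₂ _ hhol using fun h : α < 1 / β - 2 =>
    IsSectorSolution.exists_abs_hess_sub_le h0 h1 hα0 hα1 (two_add_mul_lt_pi hβ0 h)
  refine ⟨C₁ + |C₂|, by positivity, ?_⟩
  rw [sector_eq_openSector hβ0 (by linarith), frontier_openSector h0 h1', closure_openSector h0 h1']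
  intro f Ψ hf hΨ hΨ₂ hlap hzero hgrowth v₁ hv₁ v₂ hv₂
  have hsol := isSectorSolution_of_unifNormC_ne_top hα0 hf.ne hΨ hΨ₂ hlap hzero hgrowth
  have hnorm : ∀ v ∈ ({1, I} : Set ℂ), ‖v‖ ≤ 1 := by simp
  refine ⟨fun z hz => ?_, fun h => ?_⟩
  · have hL : 0 ≤ Real.log (2 + ‖z‖) := Real.log_nonneg (by linarith [norm_nonneg z])
    refine (hlog hsol (fun _ => abs_le_toReal_supNormC_openSector h0 h1' hα0 hf.ne) hΨ₂ v₁ v₂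
      (hnorm v₁ hv₁) (hnorm v₂ hv₂) z hz).trans ?_
    rw [mul_assoc _ (Real.log _), ← mul_add, mul_comm (Real.log _), add_comm (_ * _)]
    gcongr
    exact le_add_of_nonneg_right (abs_nonneg C₂)
  · rw [← ENNReal.ofReal_toReal hf.ne, ← ENNReal.ofReal_mul (by positivity)]
    refine holderSemiC_le_ofReal fun z hz w hw hne =>
      (hhol h hsol hΨ₂ v₁ v₂ (hnorm v₁ hv₁) (hnorm v₂ hv₂) z hz w hw hne).trans ?_
    gcongr
    exact (le_abs_self C₂).trans (le_add_of_nonneg_left hC₁.le)
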